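/- Let n, q ∈ ℕ with q ≥ 2, p = (p₁,…,p_{q−1}) ∈ ℕ₀^{q−1} with at least one p_i ≠ 0, let Q ∈ ℝ[X₁,…,Xₙ] be a polynomial of degree d, let Θ ∈ M_n(ℝ) be such that (1/2π)Θ is a diophantine matrix, and let ã ∈ 𝒮((ℤⁿ)^{2q}). Then the function f(s) := Σ_{l∈((ℤⁿ)^q)²} ã_l Σ'_{k∈ℤⁿ} ∏_{i=1}^{q−1} |k + l̃_i|^{p_i} · |k|^{−s} Q(k) e^{i k·Θ(l₁+⋯+l_q)} has a meromorphic continuation to the whole complex plane ℂ, with at most simple poles, all contained in the set { n + d + |p|₁ − m : m ∈ ℕ₀ }. -/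

import Mathlib

open Filter Topology

noncomputable section

/-- Euclidean norm of an integer vector `k ∈ ℤⁿ`. -/
def znorm {n : ℕ} (k : Fin n → ℤ) : ℝ := Real.sqrt (∑ i, ((k i : ℝ)) ^ 2)

/-- Schwartz (rapidly decreasing) sequences on `(ℤⁿ)^m`. -/
def IsSchwartzSeq {m n : ℕ} (b : (Fin m → Fin n → ℤ) → ℂ) : Prop :=
  ∀ r : ℕ, ∃ C : ℝ, ∀ l : Fin m → Fin n → ℤ,
    (1 + ∑ i, ∑ a, ((l i a : ℝ)) ^ 2) ^ r * ‖b l‖ ^ 2 ≤ C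

/-- A vector `a ∈ ℝⁿ` is diophantine. -/
def IsDiophantineVector {n : ℕ} (a : Fin n → ℝ) : Prop :=
  ∃ δ : ℝ, 0 < δ ∧ ∃ c : ℝ, 0 < c ∧ ∀ q : Fin n → ℤ, q ≠ 0 → ∀ m : ℤ,
    c * znorm q ^ (-δ) ≤ |(∑ i, (q i : ℝ) * a i) - (m : ℝ)|

/-- A matrix `Θ ∈ Mₙ(ℝ)` is diophantine if `ᵗΘ(u)` is a diophantine vector
for some `u ∈ ℤⁿ`. -/
def IsDiophantineMatrix {n : ℕ} (Θ : Matrix (Fin n) (Fin n) ℝ) : Prop :=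
  ∃ u : Fin n → ℤ, IsDiophantineVector (Θ.transpose.mulVec fun i => (u i : ℝ))

/-- For `l = (l₁,…,l_{2q}) ∈ (ℤⁿ)^{2q}` (0-indexed) and `1 ≤ j ≤ q`, the vector
`l̃_j = l₁ + ⋯ + l_j + l_{q+1} + ⋯ + l_{q+j}`. -/
def ltilde {q n : ℕ} (l : Fin (2 * q) → Fin n → ℤ) (j : ℕ) : Fin n → ℤ :=
  ∑ t ∈ Finset.univ.filter
      (fun t : Fin (2 * q) => (t : ℕ) < j ∨ (q ≤ (t : ℕ) ∧ (t : ℕ) < q + j)), l t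

/-- The sum `l₁ + ⋯ + l_q` of the first `q` components of `l ∈ (ℤⁿ)^{2q}`. -/
def lsumq {q n : ℕ} (l : Fin (2 * q) → Fin n → ℤ) : Fin n → ℤ :=
  ∑ t ∈ Finset.univ.filter (fun t : Fin (2 * q) => (t : ℕ) < q), l t

/-- The inner term `∏_{i=1}^{q-1} |k+l̃ᵢ|^{pᵢ} |k|^{-s} Q(k) e^{i k·Θ(l₁+⋯+l_q)}`
(term at `k = 0` omitted). -/
def bigTerm {q n : ℕ} (p : Fin (q - 1) → ℕ) (Q : MvPolynomial (Fin n) ℝ)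
    (Θ : Matrix (Fin n) (Fin n) ℝ) (s : ℂ) (l : Fin (2 * q) → Fin n → ℤ)
    (k : Fin n → ℤ) : ℂ :=
  if k = 0 then 0 else
    (∏ i : Fin (q - 1), ((znorm (k + ltilde l ((i : ℕ) + 1)) : ℝ) : ℂ) ^ (p i)) *
      ((znorm k : ℂ) ^ s)⁻¹ *
      ((MvPolynomial.eval (fun a => ((k a : ℤ) : ℝ)) Q : ℝ) : ℂ) *
      Complex.exp (Complex.I *
        ((∑ a, (k a : ℝ) * (Θ.mulVec fun j => ((lsumq l j : ℤ) : ℝ)) a : ℝ) : ℂ))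

/-!
Taylor's formula for `√(1 + x)` expands `|k + λ|` into terms homogeneous in `k`, polynomial in `λ`,
plus a remainder of arbitrarily low order, whose Dirichlet series converges arbitrarily far to the
left. This reduces the theorem to the zeta functions `∑' k, k^α |k|^(m - s) e^{2πi k·y_l}`, the
Mellin transforms of the theta series `∑' k, k^α exp(-t |k|²) e^{2πi k·y_l}`. By Poisson summation
in each variable, such a series is a pure power of `t` up to `O(t^∞)` when `y_l = 0`. When `y_l ≠ 0`
it is `O(t^∞)` altogether, and the diophantine condition keeps the constants polynomial in `l`, so
that the rapid decay of the coefficients `ã_l` absorbs them. Each Mellin transform therefore has at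
most one simple pole, and the continuations to ever larger half-planes agree on overlaps.
-/

section LatticeSums

theorem summable_norm_prod_pi {β R : Type*} [NormedCommRing R] [CompleteSpace R] {n : ℕ}
    {f : Fin n → β → R} (hf : ∀ i, Summable fun b => ‖f i b‖) :
    Summable fun k : Fin n → β => ‖∏ i, f i (k i)‖ := by
  induction n with
  | zero => exact Summable.of_finite
  | succ n ih =>
    rw [← (Fin.consEquiv fun _ : Fin (n + 1) => β).summable_iff]
    refine ((hf 0).mul_norm (ih fun i => hf i.succ)).congr fun k => ?_
    simp [Fin.prod_univ_succ, Fin.consEquiv]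

theorem tsum_prod_pi {β R : Type*} [NormedCommRing R] [CompleteSpace R] {n : ℕ}
    {f : Fin n → β → R} (hf : ∀ i, Summable fun b => ‖f i b‖) :
    ∑' k : Fin n → β, ∏ i, f i (k i) = ∏ i, ∑' b, f i b := by
  induction n with
  | zero => simp
  | succ n ih =>
    have hf' := fun i : Fin n => hf i.succ
    rw [← (Fin.consEquiv fun _ : Fin (n + 1) => β).tsum_eq, Fin.prod_univ_succ, ← ih hf',
      tsum_mul_tsum_of_summable_norm (hf 0) (summable_norm_prod_pi hf')]
    refine tsum_congr fun k => ?_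
    simp [Fin.prod_univ_succ, Fin.consEquiv]

theorem summable_norm_int_pi_rpow {ι : Type*} [Fintype ι] {r : ℝ}
    (hr : r < -Fintype.card ι) : Summable fun k : ι → ℤ => ‖k‖ ^ r := by
  let b := Pi.basisFun ℝ ι
  let e : (ι → ℤ) ≃ₗ[ℤ] Submodule.span ℤ (Set.range b) :=
    ((b.restrictScalars ℤ).equivFun).symm
  have hrank : Module.finrank ℤ (Submodule.span ℤ (Set.range b)) = Fintype.card ι := by
    rw [← e.finrank_eq, Module.finrank_fintype_fun_eq_card]
  have he : ∀ k, ‖(e k : ι → ℝ)‖ = ‖k‖ := by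
    intro k
    have hcoe : (e k : ι → ℝ) = fun i => (k i : ℝ) := by
      funext i
      simpa [e, b, Module.Basis.equivFun] using (b.restrictScalars_repr_apply ℤ (e k) i).symm
    rw [hcoe]
    rfl
  have := ZLattice.summable_norm_rpow (Submodule.span ℤ (Set.range b)) r (by rwa [hrank])
  refine (e.toEquiv.summable_iff.2 this).congr fun k => ?_
  simp [he]

theorem znorm_nonneg {n : ℕ} (k : Fin n → ℤ) : 0 ≤ znorm k := Real.sqrt_nonneg _

theorem znorm_sq {n : ℕ} (k : Fin n → ℤ) : znorm k ^ 2 = ∑ i, (k i : ℝ) ^ 2 :=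
  Real.sq_sqrt (Finset.sum_nonneg fun _ _ => sq_nonneg _)

theorem abs_le_znorm {n : ℕ} (k : Fin n → ℤ) (i : Fin n) : |(k i : ℝ)| ≤ znorm k :=
  Real.abs_le_sqrt <|
    Finset.single_le_sum (f := fun i => (k i : ℝ) ^ 2) (fun _ _ => sq_nonneg _) (Finset.mem_univ i)

theorem norm_le_znorm {n : ℕ} (k : Fin n → ℤ) : ‖k‖ ≤ znorm k :=
  (pi_norm_le_iff_of_nonneg (znorm_nonneg k)).2 fun i => by
    simpa [Int.norm_eq_abs] using abs_le_znorm k i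

theorem one_le_znorm {n : ℕ} {k : Fin n → ℤ} (hk : k ≠ 0) : 1 ≤ znorm k := by
  obtain ⟨i, hi⟩ := Function.ne_iff.1 hk
  exact le_trans (mod_cast Int.one_le_abs hi) (abs_le_znorm k i)

theorem summable_znorm_rpow {n : ℕ} {r : ℝ} (hr : r < -n) :
    Summable fun k : {k : Fin n → ℤ // k ≠ 0} => znorm k.1 ^ r := by
  have h := (summable_norm_int_pi_rpow (ι := Fin n) (r := r) (by simpa)).comp_injective
    (Subtype.val_injective (p := fun k => k ≠ 0))
  refine h.of_nonneg_of_le (fun k => Real.rpow_nonneg (znorm_nonneg _) _) fun k => ?_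
  exact Real.rpow_le_rpow_of_nonpos (norm_pos_iff.2 k.2) (norm_le_znorm _)
    (hr.le.trans (by simp))

end LatticeSums

section RapidDecay

variable {Λ E : Type*} [SeminormedAddGroup Λ]

/-- Absolute summability against every power of the weight `1 + ‖l‖`. -/
def IsRapidlyDecreasing (b : Λ → ℂ) : Prop :=
  ∀ M : ℕ, Summable fun l => ‖b l‖ * (1 + ‖l‖) ^ M

/-- Polynomial growth in the weight `1 + ‖l‖`. -/
def IsSlowlyIncreasing [Norm E] (c : Λ → E) : Prop :=
  ∃ (C : ℝ) (M : ℕ), ∀ l, ‖c l‖ ≤ C * (1 + ‖l‖) ^ M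

theorem IsRapidlyDecreasing.summable_norm {b : Λ → ℂ} (hb : IsRapidlyDecreasing b) :
    Summable fun l => ‖b l‖ := by
  simpa using hb 0

theorem IsRapidlyDecreasing.mul_isSlowlyIncreasing {b c : Λ → ℂ} (hb : IsRapidlyDecreasing b)
    (hc : IsSlowlyIncreasing c) : IsRapidlyDecreasing (b * c) := by
  obtain ⟨C, K, hC⟩ := hc
  refine fun M => ((hb (K + M)).mul_left C).of_nonneg_of_le (fun l => by positivity) fun l => ?_
  calc ‖(b * c) l‖ * (1 + ‖l‖) ^ M = ‖b l‖ * ‖c l‖ * (1 + ‖l‖) ^ M := by simp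
    _ ≤ ‖b l‖ * (C * (1 + ‖l‖) ^ K) * (1 + ‖l‖) ^ M := by gcongr; exact hC l
    _ = C * (‖b l‖ * (1 + ‖l‖) ^ (K + M)) := by ring

theorem isSlowlyIncreasing_const [Norm E] (c : E) : IsSlowlyIncreasing fun _ : Λ => c :=
  ⟨‖c‖, 0, by simp⟩

theorem IsSlowlyIncreasing.add [SeminormedAddGroup E] {c c' : Λ → E} (hc : IsSlowlyIncreasing c)
    (hc' : IsSlowlyIncreasing c') : IsSlowlyIncreasing fun l => c l + c' l := by
  obtain ⟨C, M, hC⟩ := hc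
  obtain ⟨C', M', hC'⟩ := hc'
  refine ⟨|C| + |C'|, M + M', fun l => (norm_add_le _ _).trans ?_⟩
  have hl : 1 ≤ 1 + ‖l‖ := by simp
  calc ‖c l‖ + ‖c' l‖ ≤ |C| * (1 + ‖l‖) ^ M + |C'| * (1 + ‖l‖) ^ M' := by
        gcongr
        exacts [(hC l).trans (by gcongr; exact le_abs_self C),
          (hC' l).trans (by gcongr; exact le_abs_self C')]
    _ ≤ |C| * (1 + ‖l‖) ^ (M + M') + |C'| * (1 + ‖l‖) ^ (M + M') := by
        gcongr <;> simp
    _ = _ := by ring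

theorem IsSlowlyIncreasing.mul [NonUnitalSeminormedRing E] {c c' : Λ → E}
    (hc : IsSlowlyIncreasing c) (hc' : IsSlowlyIncreasing c') :
    IsSlowlyIncreasing fun l => c l * c' l := by
  obtain ⟨C, M, hC⟩ := hc
  obtain ⟨C', M', hC'⟩ := hc'
  refine ⟨C * C', M + M', fun l => (norm_mul_le _ _).trans ?_⟩
  calc ‖c l‖ * ‖c' l‖ ≤ (C * (1 + ‖l‖) ^ M) * (C' * (1 + ‖l‖) ^ M') :=
        mul_le_mul (hC l) (hC' l) (norm_nonneg _) ((norm_nonneg _).trans (hC l))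
    _ = _ := by ring

theorem summable_one_add_norm_pow_inv (m n : ℕ) :
    Summable fun l : Fin m → Fin n → ℤ => ((1 + ‖l‖) ^ (m * n + 1))⁻¹ := by
  have hr : -((m * n + 1 : ℕ) : ℝ) < -Fintype.card (Fin m × Fin n) := by simp
  rw [← (Equiv.curry (Fin m) (Fin n) ℤ).summable_iff]
  refine (summable_norm_int_pi_rpow hr).of_norm_bounded_eventually ?_
  filter_upwards [(Set.finite_singleton 0).compl_mem_cofinite] with k hk
  have hk' : 0 < ‖k‖ := norm_pos_iff.2 hk
  have hcurry : ‖k‖ ≤ ‖Equiv.curry (Fin m) (Fin n) ℤ k‖ :=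
    (pi_norm_le_iff_of_nonneg (norm_nonneg _)).2 fun i =>
      (norm_le_pi_norm (Equiv.curry (Fin m) (Fin n) ℤ k i.1) i.2).trans
        (norm_le_pi_norm (Equiv.curry (Fin m) (Fin n) ℤ k) i.1)
  rw [Real.rpow_neg hk'.le, Real.rpow_natCast, Function.comp_apply,
    Real.norm_of_nonneg (by positivity)]
  gcongr
  linarith

theorem norm_sq_le_sum_sq {m n : ℕ} (l : Fin m → Fin n → ℤ) :
    ‖l‖ ^ 2 ≤ ∑ i, ∑ a, (l i a : ℝ) ^ 2 := by
  rw [← Real.le_sqrt (norm_nonneg _) (by positivity)]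
  refine (pi_norm_le_iff_of_nonneg (Real.sqrt_nonneg _)).2 fun i =>
    (norm_le_znorm (l i)).trans (Real.sqrt_le_sqrt ?_)
  exact Finset.single_le_sum (f := fun i => ∑ a, (l i a : ℝ) ^ 2) (fun _ _ => by positivity)
    (Finset.mem_univ i)

theorem IsSchwartzSeq.isRapidlyDecreasing {m n : ℕ} {b : (Fin m → Fin n → ℤ) → ℂ}
    (hb : IsSchwartzSeq b) : IsRapidlyDecreasing b := by
  intro M
  set R := M + (m * n + 1) with hR
  obtain ⟨C, hC⟩ := hb R
  refine ((summable_one_add_norm_pow_inv m n).mul_left √(2 ^ R * C)).of_nonneg_of_le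
    (fun l => by positivity) fun l => ?_
  rw [le_mul_inv_iff₀ (by positivity)]
  apply Real.le_sqrt_of_sq_le
  have hw : (1 + ‖l‖) ^ 2 ≤ 2 * (1 + ∑ i, ∑ a, (l i a : ℝ) ^ 2) := by
    nlinarith [norm_sq_le_sum_sq l, sq_nonneg (1 - ‖l‖)]
  calc (‖b l‖ * (1 + ‖l‖) ^ M * (1 + ‖l‖) ^ (m * n + 1)) ^ 2
      = ((1 + ‖l‖) ^ 2) ^ R * ‖b l‖ ^ 2 := by rw [pow_right_comm, hR]; ring
    _ ≤ (2 * (1 + ∑ i, ∑ a, (l i a : ℝ) ^ 2)) ^ R * ‖b l‖ ^ 2 := by gcongr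
    _ = 2 ^ R * ((1 + ∑ i, ∑ a, (l i a : ℝ) ^ 2) ^ R * ‖b l‖ ^ 2) := by rw [mul_pow, mul_assoc]
    _ ≤ 2 ^ R * C := by gcongr; exact hC l

end RapidDecay

section TwistedRiemannSums

open scoped FourierTransform SchwartzMap

theorem summable_inv_one_add_int_sq : Summable fun k : ℤ => (1 + (k : ℝ) ^ 2)⁻¹ := by
  refine (Real.summable_one_div_int_pow.2 one_lt_two).of_norm_bounded_eventually ?_
  filter_upwards [(Set.finite_singleton 0).compl_mem_cofinite] with k hk
  have hk' : (k : ℝ) ≠ 0 := by simpa using hk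
  rw [Real.norm_of_nonneg (by positivity), one_div]
  gcongr
  linarith

theorem exists_tsum_inv_one_add_sq_le : ∃ C : ℝ, ∀ y : ℝ,
    (Summable fun k : ℤ => (1 + (y + k) ^ 2)⁻¹) ∧ ∑' k : ℤ, (1 + (y + k) ^ 2)⁻¹ ≤ C := by
  have hsum := summable_inv_one_add_int_sq.mul_left 3
  refine ⟨∑' k : ℤ, 3 * (1 + (k : ℝ) ^ 2)⁻¹, fun y => ?_⟩
  have hle : ∀ k : ℤ, (1 + (Int.fract y + k) ^ 2)⁻¹ ≤ 3 * (1 + (k : ℝ) ^ 2)⁻¹ := by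
    intro k
    rw [← div_eq_mul_inv, inv_le_comm₀ (by positivity) (by positivity), inv_div,
      div_le_iff₀ (by norm_num)]
    nlinarith [Int.fract_nonneg y, Int.fract_lt_one y, sq_nonneg (2 * Int.fract y + k)]
  have hfract : (fun k : ℤ => (1 + (y + k) ^ 2)⁻¹) ∘ Equiv.subRight ⌊y⌋ =
      fun k : ℤ => (1 + (Int.fract y + k) ^ 2)⁻¹ := by
    funext k
    rw [Function.comp_apply, Equiv.subRight_apply, Int.fract]
    push_cast
    ring_nf
  have hs := hsum.of_nonneg_of_le (fun k => by positivity) hle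
  refine ⟨(Equiv.subRight ⌊y⌋).summable_iff.1 (hfract ▸ hs), ?_⟩
  rw [← (Equiv.subRight ⌊y⌋).tsum_eq]
  exact (congrArg tsum hfract).trans_le (hs.tsum_le_tsum hle hsum)

theorem exists_abs_pow_mul_norm_comp_div_le (g : 𝓢(ℝ, ℂ)) (M : ℕ) :
    ∃ C : ℝ, ∀ h ∈ Set.Ioc (0 : ℝ) 1, ∀ x : ℝ,
      |x| ^ M * ‖g (x / h)‖ ≤ C * h ^ M * (1 + x ^ 2)⁻¹ := by
  refine ⟨SchwartzMap.seminorm ℝ M 0 g + SchwartzMap.seminorm ℝ (M + 2) 0 g, fun h hh x => ?_⟩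
  obtain ⟨hh0, hh1⟩ := hh
  have hx : x ^ 2 ≤ (x / h) ^ 2 := by
    rw [div_pow, le_div_iff₀ (by positivity)]
    exact mul_le_of_le_one_right (sq_nonneg x) (pow_le_one₀ hh0.le hh1)
  have hcancel : (|x| / h) ^ M * h ^ M = |x| ^ M := by rw [← mul_pow, div_mul_cancel₀ _ hh0.ne']
  have h1 := g.norm_pow_mul_le_seminorm ℝ M (x / h)
  have h2 := g.norm_pow_mul_le_seminorm ℝ (M + 2) (x / h)
  rw [le_mul_inv_iff₀ (by positivity)]
  calc |x| ^ M * ‖g (x / h)‖ * (1 + x ^ 2)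
      ≤ |x| ^ M * ‖g (x / h)‖ * (1 + (x / h) ^ 2) := by gcongr
    _ = (‖x / h‖ ^ M * ‖g (x / h)‖ + ‖x / h‖ ^ (M + 2) * ‖g (x / h)‖) * h ^ M := by
      rw [pow_add, Real.norm_eq_abs, sq_abs, abs_div, abs_of_pos hh0, ← hcancel]
      ring
    _ ≤ _ := by gcongr

theorem exists_tsum_abs_pow_mul_norm_le (g : 𝓢(ℝ, ℂ)) (M : ℕ) :
    ∃ C : ℝ, ∀ h ∈ Set.Ioc (0 : ℝ) 1, ∀ y : ℝ,
      (Summable fun k : ℤ => |y + k| ^ M * ‖g ((y + k) / h)‖) ∧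
        ∑' k : ℤ, |y + k| ^ M * ‖g ((y + k) / h)‖ ≤ C * h ^ M := by
  obtain ⟨C, hC⟩ := exists_abs_pow_mul_norm_comp_div_le g M
  obtain ⟨K, hK⟩ := exists_tsum_inv_one_add_sq_le
  have hC0 : 0 ≤ C := by
    simpa using (by positivity : 0 ≤ |(0 : ℝ)| ^ M * ‖g (0 / 1)‖).trans (hC 1 (by simp) 0)
  refine ⟨C * K, fun h hh y => ?_⟩
  obtain ⟨hs, hsK⟩ := hK y
  have hbound := fun k : ℤ => hC h hh (y + k)
  have hsum := (hs.mul_left (C * h ^ M)).of_nonneg_of_le (fun k => by positivity) hbound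
  have hh0 := hh.1.le
  refine ⟨hsum, (hsum.tsum_le_tsum hbound (hs.mul_left _)).trans ?_⟩
  rw [tsum_mul_left, mul_right_comm]
  gcongr

/-- The Riemann sum of mesh `h` for `∫ f(x) e(xy/h) dx`, where `e(x) = exp(2πix)`. -/
def twistedRiemannSum (f : ℝ → ℂ) (h y : ℝ) : ℂ :=
  h * ∑' k : ℤ, f (h * k) * 𝐞 (k * y)

theorem exists_schwartzMap_comp_mul (f : 𝓢(ℝ, ℂ)) {c : ℝ} (hc : c ≠ 0) :
    ∃ g : 𝓢(ℝ, ℂ), (g : ℝ → ℂ) = fun x => f (c * x) := by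
  let L := ContinuousLinearEquiv.unitsEquivAut ℝ (Units.mk0 c hc)
  refine ⟨SchwartzMap.compCLMOfContinuousLinearEquiv ℝ L f, funext fun x => ?_⟩
  simp [L, mul_comm]

theorem summable_norm_comp_mul_int (f : 𝓢(ℝ, ℂ)) {h : ℝ} (hh : h ≠ 0) (y : ℝ) :
    Summable fun k : ℤ => ‖f (h * k) * 𝐞 (k * y)‖ := by
  obtain ⟨g, hg⟩ := exists_schwartzMap_comp_mul f hh
  have hdecay := (g.isBigO_cocompact_rpow (-2)).comp_tendsto Int.tendsto_coe_cofinite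
  have := (summable_of_isBigO (Real.summable_abs_int_rpow one_lt_two) hdecay).norm
  simpa [hg, Circle.norm_coe] using this

theorem fourier_comp_div (f : ℝ → ℂ) {h : ℝ} (hh : 0 < h) (w : ℝ) :
    𝓕 (fun x => f (x / h)) w = h * 𝓕 f (h * w) := by
  simp only [Real.fourier_real_eq_integral_exp_smul]
  have := MeasureTheory.Measure.integral_comp_div
    (fun v : ℝ => Complex.exp (↑(-2 * Real.pi * v * (h * w)) * Complex.I) • f v) h
  rw [abs_of_pos hh] at this
  rw [← Complex.real_smul, ← this]
  congr 1
  funext v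
  congr 4
  field_simp

theorem twistedRiemannSum_eq_tsum_fourierInv (f : 𝓢(ℝ, ℂ)) {h : ℝ} (hh : 0 < h) (y : ℝ) :
    twistedRiemannSum f h y = ∑' k : ℤ, 𝓕⁻ f ((y + k) / h) := by
  obtain ⟨G, hG⟩ := exists_schwartzMap_comp_mul (𝓕⁻ f) (inv_ne_zero hh.ne')
  have hpoisson := G.tsum_eq_tsum_fourier y
  simp only [SchwartzMap.fourier_coe, hG, inv_mul_eq_div] at hpoisson
  rw [hpoisson, twistedRiemannSum, ← tsum_mul_left]
  refine tsum_congr fun k => ?_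
  rw [fourier_comp_div _ hh, ← SchwartzMap.fourier_coe, FourierTransform.fourier_fourierInv_eq,
    fourier_coe_apply, Real.fourierChar_apply, mul_assoc]
  push_cast
  ring_nf

theorem exists_norm_twistedRiemannSum_le (f : 𝓢(ℝ, ℂ)) :
    ∃ C : ℝ, ∀ h ∈ Set.Ioc (0 : ℝ) 1, ∀ y : ℝ, ‖twistedRiemannSum f h y‖ ≤ C := by
  obtain ⟨C, hC⟩ := exists_tsum_abs_pow_mul_norm_le (𝓕⁻ f) 0
  refine ⟨C, fun h hh y => ?_⟩
  obtain ⟨hs, hle⟩ := hC h hh y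
  simp only [pow_zero, one_mul, mul_one] at hs hle
  rw [twistedRiemannSum_eq_tsum_fourierInv _ hh.1]
  exact (norm_tsum_le_tsum_norm hs).trans hle

theorem exists_pow_mul_norm_twistedRiemannSum_le (f : 𝓢(ℝ, ℂ)) (M : ℕ) :
    ∃ C : ℝ, ∀ h ∈ Set.Ioc (0 : ℝ) 1, ∀ η ≥ 0, ∀ y : ℝ, (∀ m : ℤ, η ≤ |y - m|) →
      η ^ M * ‖twistedRiemannSum f h y‖ ≤ C * h ^ M := by
  obtain ⟨C, hC⟩ := exists_tsum_abs_pow_mul_norm_le (𝓕⁻ f) M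
  refine ⟨C, fun h hh η hη y hy => ?_⟩
  obtain ⟨hs, hle⟩ := hC h hh y
  have hnorm : ‖(η : ℂ) ^ M‖ = η ^ M := by
    rw [norm_pow, Complex.norm_real, Real.norm_of_nonneg hη]
  rw [twistedRiemannSum_eq_tsum_fourierInv _ hh.1, ← hnorm, ← norm_mul, ← tsum_mul_left]
  refine (tsum_of_norm_bounded hs.hasSum fun k => ?_).trans hle
  rw [norm_mul, hnorm]
  gcongr
  simpa using hy (-k)

theorem exists_norm_twistedRiemannSum_zero_sub_le (f : 𝓢(ℝ, ℂ)) (M : ℕ) :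
    ∃ C : ℝ, ∀ h ∈ Set.Ioc (0 : ℝ) 1, ‖twistedRiemannSum f h 0 - 𝓕⁻ f 0‖ ≤ C * h ^ M := by
  obtain ⟨C₀, hC₀⟩ := exists_tsum_abs_pow_mul_norm_le (𝓕⁻ f) 0
  obtain ⟨C, hC⟩ := exists_tsum_abs_pow_mul_norm_le (𝓕⁻ f) M
  refine ⟨C, fun h hh => ?_⟩
  have hs : Summable fun k : ℤ => 𝓕⁻ f ((0 + k) / h) :=
    .of_norm (by simpa using (hC₀ h hh 0).1)
  obtain ⟨hsM, hle⟩ := hC h hh 0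
  rw [twistedRiemannSum_eq_tsum_fourierInv _ hh.1, hs.tsum_eq_add_tsum_ite 0]
  simp only [Int.cast_zero, add_zero, zero_div, add_sub_cancel_left]
  refine (tsum_of_norm_bounded hsM.hasSum fun k => ?_).trans hle
  split_ifs with hk
  · rw [norm_zero]
    positivity
  · refine le_mul_of_one_le_left (norm_nonneg _) (one_le_pow₀ ?_)
    simpa using mod_cast Int.one_le_abs hk

end TwistedRiemannSums

section PolynomialGaussian

open Polynomial
open scoped SchwartzMap ContDiff

theorem exists_abs_pow_mul_norm_eval_mul_gaussian_le (P : ℂ[X]) (j : ℕ) :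
    ∃ C : ℝ, ∀ x : ℝ, |x| ^ j * ‖P.eval (x : ℂ) * Complex.exp (-Real.pi * (x : ℂ) ^ 2)‖ ≤ C := by
  induction P using Polynomial.induction_on' with
  | add P R hP hR =>
    obtain ⟨C, hC⟩ := hP
    obtain ⟨D, hD⟩ := hR
    refine ⟨C + D, fun x => ?_⟩
    rw [eval_add, add_mul]
    exact (mul_le_mul_of_nonneg_left (norm_add_le _ _) (by positivity)).trans
      ((mul_add _ _ _).trans_le (add_le_add (hC x) (hD x)))
  | monomial i c =>
    refine ⟨‖c‖ * ((i + j).factorial * Real.exp 1), fun x => ?_⟩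
    have hgauss : ‖Complex.exp (-Real.pi * (x : ℂ) ^ 2)‖ = Real.exp (-Real.pi * x ^ 2) := by
      rw [Complex.norm_exp]
      norm_cast
    have hpow : |x| ^ (i + j) ≤ (i + j).factorial * Real.exp |x| := by
      rw [← div_le_iff₀' (by positivity)]
      exact Real.pow_div_factorial_le_exp _ (abs_nonneg x) _
    have hquad : |x| - Real.pi * x ^ 2 ≤ 1 := by
      rw [← sq_abs]
      nlinarith [Real.pi_gt_three, sq_nonneg (|x| - 1), abs_nonneg x]
    rw [eval_monomial, norm_mul, norm_mul, norm_pow, Complex.norm_real, Real.norm_eq_abs, hgauss]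
    calc |x| ^ j * (‖c‖ * |x| ^ i * Real.exp (-Real.pi * x ^ 2))
        = ‖c‖ * (|x| ^ (i + j) * Real.exp (-Real.pi * x ^ 2)) := by ring
      _ ≤ ‖c‖ * ((i + j).factorial * Real.exp |x| * Real.exp (-Real.pi * x ^ 2)) := by gcongr
      _ = ‖c‖ * ((i + j).factorial * Real.exp (|x| - Real.pi * x ^ 2)) := by
        rw [mul_assoc, ← Real.exp_add]
        ring_nf
      _ ≤ ‖c‖ * ((i + j).factorial * Real.exp 1) := by gcongr

theorem deriv_eval_mul_gaussian (P : ℂ[X]) :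
    deriv (fun x : ℝ => P.eval (x : ℂ) * Complex.exp (-Real.pi * (x : ℂ) ^ 2)) =
      fun x : ℝ => (derivative P - C (2 * Real.pi : ℂ) * X * P).eval (x : ℂ) *
        Complex.exp (-Real.pi * (x : ℂ) ^ 2) := by
  funext x
  have hexp : HasDerivAt (fun z : ℂ => Complex.exp (-Real.pi * z ^ 2))
      (Complex.exp (-Real.pi * (x : ℂ) ^ 2) * (-Real.pi * (2 * x))) x := by
    simpa using ((hasDerivAt_pow 2 (x : ℂ)).const_mul (-Real.pi : ℂ)).cexp
  refine ((P.hasDerivAt (x : ℂ)).mul hexp).comp_ofReal.deriv.trans ?_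
  simp only [eval_sub, eval_mul, eval_C, eval_X]
  ring

/-- The Schwartz function `x ↦ P(x) exp(-πx²)`. -/
def polynomialGaussian (P : ℂ[X]) : 𝓢(ℝ, ℂ) where
  toFun x := P.eval (x : ℂ) * Complex.exp (-Real.pi * (x : ℂ) ^ 2)
  smooth' := by
    have h : Differentiable ℂ fun z : ℂ => P.eval z * Complex.exp (-Real.pi * z ^ 2) := by fun_prop
    exact (h.contDiff.restrict_scalars ℝ).comp Complex.ofRealCLM.contDiff
  decay' j m := by
    simp only [norm_iteratedFDeriv_eq_norm_iteratedDeriv, Real.norm_eq_abs]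
    induction m generalizing P with
    | zero => simpa using exists_abs_pow_mul_norm_eval_mul_gaussian_le P j
    | succ m ih =>
      rw [iteratedDeriv_succ', deriv_eval_mul_gaussian]
      exact ih _

theorem polynomialGaussian_X_pow_apply (j : ℕ) (x : ℝ) :
    polynomialGaussian (X ^ j) x = (x : ℂ) ^ j * Complex.exp (-Real.pi * (x : ℂ) ^ 2) := by
  change (X ^ j : ℂ[X]).eval (x : ℂ) * _ = _
  rw [eval_pow, eval_X]

end PolynomialGaussian

section DiophantinePhases

open Asymptotics
open scoped FourierTransform SchwartzMap

theorem isBigO_prod_sub_prod {ι α : Type*} {F : Filter α} {u : ι → α → ℂ} {a : ι → ℂ}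
    {g : α → ℝ} (hg : g =O[F] fun _ => (1 : ℝ)) (s : Finset ι)
    (h : ∀ i ∈ s, (fun x => u i x - a i) =O[F] g) :
    (fun x => ∏ i ∈ s, u i x - ∏ i ∈ s, a i) =O[F] g := by
  classical
  induction s using Finset.induction_on with
  | empty => simpa using isBigO_zero g F
  | insert i s his ih =>
    have hi := h i (Finset.mem_insert_self i s)
    have hs := ih fun j hj => h j (Finset.mem_insert_of_mem hj)
    have hbdd : u i =O[F] fun _ => (1 : ℝ) := by
      simpa using (hi.trans hg).add (isBigO_const_const (a i) one_ne_zero F)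
    have hsplit : (fun x => ∏ j ∈ insert i s, u j x - ∏ j ∈ insert i s, a j) = fun x =>
        u i x * (∏ j ∈ s, u j x - ∏ j ∈ s, a j) + (u i x - a i) * ∏ j ∈ s, a j := by
      funext x
      rw [Finset.prod_insert his, Finset.prod_insert his]
      ring
    rw [hsplit]
    refine IsBigO.add (by simpa using hbdd.mul hs) ?_
    simpa using hi.mul (isBigO_const_const (∏ j ∈ s, a j) one_ne_zero F)

variable {Λ : Type*} [SeminormedAddGroup Λ] {n : ℕ}

/-- A family of phases `y l ∈ ℝⁿ` which either vanish or have a coordinate at distance at least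
`c (1 + ‖l‖)⁻ᴷ` from the integers. -/
def IsDiophantinePhase (y : Λ → Fin n → ℝ) : Prop :=
  ∃ c > 0, ∃ K : ℕ, ∀ l, y l = 0 ∨ ∃ i, ∀ m : ℤ, c / (1 + ‖l‖) ^ K ≤ |y l i - m|

theorem exists_norm_prod_twistedRiemannSum_le (f : Fin n → 𝓢(ℝ, ℂ)) (s : Finset (Fin n)) :
    ∃ C : ℝ, ∀ h ∈ Set.Ioc (0 : ℝ) 1, ∀ y : Fin n → ℝ,
      ‖∏ i ∈ s, twistedRiemannSum (f i) h (y i)‖ ≤ C := by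
  choose D hD using fun i => exists_norm_twistedRiemannSum_le (f i)
  refine ⟨∏ i ∈ s, D i, fun h hh y => ?_⟩
  rw [norm_prod]
  exact Finset.prod_le_prod (fun i _ => norm_nonneg _) fun i _ => hD i h hh (y i)

theorem exists_norm_prod_twistedRiemannSum_le_of_exists_le_abs_sub (f : Fin n → 𝓢(ℝ, ℂ)) (M : ℕ) :
    ∃ C : ℝ, ∀ h ∈ Set.Ioc (0 : ℝ) 1, ∀ η > 0, ∀ y : Fin n → ℝ,
      (∃ i, ∀ m : ℤ, η ≤ |y i - m|) →
        ‖∏ i, twistedRiemannSum (f i) h (y i)‖ ≤ C * (h / η) ^ M := by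
  choose D hD using fun i => exists_norm_prod_twistedRiemannSum_le f (Finset.univ.erase i)
  choose C hC using fun i => exists_pow_mul_norm_twistedRiemannSum_le (f i) M
  obtain ⟨B, hB⟩ := Finite.exists_le fun i => C i * D i
  refine ⟨B, fun h hh η hη y ⟨i, hi⟩ => ?_⟩
  have hh0 := hh.1
  have hfactor : ‖twistedRiemannSum (f i) h (y i)‖ ≤ C i * (h / η) ^ M := by
    rw [div_pow, ← mul_div_assoc, le_div_iff₀' (by positivity)]
    exact hC i h hh η hη.le (y i) hi
  rw [← Finset.mul_prod_erase _ _ (Finset.mem_univ i), norm_mul]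
  calc _ ≤ C i * (h / η) ^ M * D i :=
        mul_le_mul hfactor (hD i h hh y) (norm_nonneg _) ((norm_nonneg _).trans hfactor)
    _ = C i * D i * (h / η) ^ M := by ring
    _ ≤ B * (h / η) ^ M := by gcongr; exact hB i

theorem exists_norm_prod_twistedRiemannSum_zero_sub_le (f : Fin n → 𝓢(ℝ, ℂ)) (M : ℕ) :
    ∃ C : ℝ, ∀ h ∈ Set.Ioc (0 : ℝ) 1,
      ‖∏ i, twistedRiemannSum (f i) h 0 - ∏ i, 𝓕⁻ (f i) 0‖ ≤ C * h ^ M := by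
  have hzero : (fun h => ∏ i, twistedRiemannSum (f i) h 0 - ∏ i, 𝓕⁻ (f i) 0)
      =O[𝓟 (Set.Ioc 0 1)] fun h : ℝ => h ^ M := by
    refine isBigO_prod_sub_prod ?_ _ fun i _ => ?_
    · refine isBigO_principal.2 ⟨1, fun h hh => ?_⟩
      simpa [abs_of_pos hh.1] using pow_le_one₀ hh.1.le hh.2
    · obtain ⟨C, hC⟩ := exists_norm_twistedRiemannSum_zero_sub_le (f i) M
      refine isBigO_principal.2 ⟨C, fun h hh => ?_⟩
      simpa [abs_of_pos hh.1] using hC h hh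
  obtain ⟨C, hC⟩ := isBigO_principal.1 hzero
  exact ⟨C, fun h hh => by simpa [abs_of_pos hh.1] using hC h hh⟩

open Classical in
/-- The limit as `h → 0` of `∏ i, twistedRiemannSum (f i) h (y i)`. -/
def twistedRiemannLimit (f : Fin n → 𝓢(ℝ, ℂ)) (y : Fin n → ℝ) : ℂ :=
  if y = 0 then ∏ i, 𝓕⁻ (f i) 0 else 0

theorem IsDiophantinePhase.exists_norm_prod_twistedRiemannSum_sub_le {y : Λ → Fin n → ℝ}
    (hy : IsDiophantinePhase y) (f : Fin n → 𝓢(ℝ, ℂ)) (M : ℕ) :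
    ∃ C : ℝ, ∃ K : ℕ, ∀ h ∈ Set.Ioc (0 : ℝ) 1, ∀ l,
      ‖∏ i, twistedRiemannSum (f i) h (y l i) - twistedRiemannLimit f (y l)‖ ≤
        C * (1 + ‖l‖) ^ K * h ^ M := by
  obtain ⟨c, hc, K, hK⟩ := hy
  obtain ⟨C₀, hC₀⟩ := exists_norm_prod_twistedRiemannSum_zero_sub_le f M
  obtain ⟨C, hC⟩ := exists_norm_prod_twistedRiemannSum_le_of_exists_le_abs_sub f M
  refine ⟨max C₀ (C * (c ^ M)⁻¹), K * M, fun h hh l => ?_⟩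
  have hh0 := hh.1.le
  by_cases hl : y l = 0
  · have hone : 1 ≤ (1 + ‖l‖) ^ (K * M) := one_le_pow₀ (by simp)
    have hC₀' : 0 ≤ C₀ := by simpa using (norm_nonneg _).trans (hC₀ 1 (by simp))
    simp only [hl, twistedRiemannLimit, Pi.zero_apply, if_true]
    calc _ ≤ C₀ * 1 * h ^ M := by simpa using hC₀ h hh
      _ ≤ _ := by gcongr; exact le_max_left _ _
  · have hη : 0 < c / (1 + ‖l‖) ^ K := by positivity
    rw [twistedRiemannLimit, if_neg hl, sub_zero]
    refine (hC h hh _ hη _ ((hK l).resolve_left hl)).trans ?_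
    calc C * (h / (c / (1 + ‖l‖) ^ K)) ^ M
        = C * (c ^ M)⁻¹ * (1 + ‖l‖) ^ (K * M) * h ^ M := by
          rw [pow_mul, div_div_eq_mul_div, div_pow, mul_pow]
          ring
      _ ≤ _ := by gcongr; exact le_max_right _ _

theorem IsRapidlyDecreasing.isBigO_tsum_prod_twistedRiemannSum_sub {b : Λ → ℂ}
    (hb : IsRapidlyDecreasing b) {y : Λ → Fin n → ℝ} (hy : IsDiophantinePhase y)
    (f : Fin n → 𝓢(ℝ, ℂ)) (M : ℕ) :
    (fun h : ℝ => ∑' l, b l * ∏ i, twistedRiemannSum (f i) h (y l i) -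
      ∑' l, b l * twistedRiemannLimit f (y l)) =O[𝓝[>] 0] fun h => h ^ M := by
  obtain ⟨C, K, hC⟩ := hy.exists_norm_prod_twistedRiemannSum_sub_le f M
  obtain ⟨D, hD⟩ := exists_norm_prod_twistedRiemannSum_le f Finset.univ
  have hlim : Summable fun l => b l * twistedRiemannLimit f (y l) := by
    refine (hb.summable_norm.mul_right ‖∏ i, 𝓕⁻ (f i) 0‖).of_norm_bounded fun l => ?_
    rw [norm_mul, twistedRiemannLimit]
    gcongr
    split_ifs
    · rfl
    · simpa only [norm_zero] using norm_nonneg _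
  refine IsBigO.of_bound (∑' l, ‖b l‖ * (1 + ‖l‖) ^ K * C) ?_
  filter_upwards [Ioc_mem_nhdsGT one_pos] with h hh
  have hsum : Summable fun l => b l * ∏ i, twistedRiemannSum (f i) h (y l i) := by
    refine (hb.summable_norm.mul_right D).of_norm_bounded fun l => ?_
    rw [norm_mul]
    gcongr
    exact hD h hh (y l)
  rw [← hsum.tsum_sub hlim, Real.norm_of_nonneg (pow_nonneg hh.1.le M), ← tsum_mul_right]
  refine tsum_of_norm_bounded (((hb K).mul_right C).mul_right _).hasSum fun l => ?_
  rw [← mul_sub, norm_mul]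
  calc _ ≤ ‖b l‖ * (C * (1 + ‖l‖) ^ K * h ^ M) := by gcongr; exact hC h hh l
    _ = _ := by ring

end DiophantinePhases

section MellinContinuation

open Asymptotics MeasureTheory Set

theorem exists_differentiable_mellin_eq {G : ℝ → ℂ} (hloc : LocallyIntegrableOn G (Ioi 0))
    {r : ℝ} (hr : 0 < r) (htop : G =O[atTop] fun t => Real.exp (-r * t)) {c c₀ a : ℂ}
    (hbot : ∀ M : ℕ, (fun t : ℝ => G t + c₀ - c * (t : ℂ) ^ (-a)) =O[𝓝[>] 0] fun t => t ^ M) :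
    ∃ F : ℂ → ℂ, Differentiable ℂ F ∧ ∀ w : ℂ, 0 < w.re → a.re < w.re →
      mellin G w = F w - c₀ / w + c / (w - a) := by
  set I₀ : ℝ → ℂ := (Ioc (0 : ℝ) 1).indicator fun _ => 1
  set I : ℝ → ℂ := (Ioc (0 : ℝ) 1).indicator fun t => (t : ℂ) ^ (-a)
  set f : ℝ → ℂ := fun t => G t + c₀ • I₀ t - c • I t with hf
  have hG : G = fun t => f t - c₀ • I₀ t + c • I t := by
    funext t
    simp only [hf]
    ring
  have hcpow : ContinuousOn (fun t : ℝ => (t : ℂ) ^ (-a)) (Ioi 0) := fun t ht =>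
    (Complex.continuousAt_ofReal_cpow_const t _ (.inr (ne_of_gt ht))).continuousWithinAt
  have hindicator : ∀ g : ℝ → ℂ, ContinuousOn g (Ioi 0) →
      LocallyIntegrableOn ((Ioc (0 : ℝ) 1).indicator g) (Ioi 0) := fun g hg x hx =>
    let ⟨u, hu, hi⟩ := hg.locallyIntegrableOn measurableSet_Ioi x hx
    ⟨u, hu, hi.indicator measurableSet_Ioc⟩
  have hfloc : LocallyIntegrableOn f (Ioi 0) :=
    (hloc.add ((hindicator _ continuousOn_const).smul c₀)).sub ((hindicator _ hcpow).smul c)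
  have hftop : f =O[atTop] fun t => Real.exp (-r * t) := by
    refine htop.congr' ?_ .rfl
    filter_upwards [eventually_gt_atTop 1] with t ht
    simp [hf, I₀, I, indicator_of_notMem (fun h : t ∈ Ioc (0 : ℝ) 1 => ht.not_ge h.2)]
  have hfbot : ∀ M : ℕ, f =O[𝓝[>] 0] fun t => t ^ (-(-(M : ℝ))) := fun M => by
    simp only [neg_neg, Real.rpow_natCast]
    refine (hbot M).congr' ?_ .rfl
    filter_upwards [Ioc_mem_nhdsGT one_pos] with t ht
    simp [hf, I₀, I, indicator_of_mem ht]
  refine ⟨mellin f, fun w => ?_, fun w hw hwa => ?_⟩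
  · obtain ⟨M, hM⟩ := exists_nat_gt (-w.re)
    exact mellin_differentiableAt_of_isBigO_rpow_exp hr hfloc hftop (hfbot M) (by linarith)
  · have hconv := mellinConvergent_of_isBigO_rpow_exp hr hfloc hftop (hfbot 0) (by simpa using hw)
    have h₀ := hasMellin_one_Ioc hw
    have h := hasMellin_cpow_Ioc (-a) (s := w) (by simpa using hwa)
    have hsub := hasMellin_sub hconv (hasMellin_const_smul h₀.1 c₀).1
    have hadd := hasMellin_add hsub.1 (hasMellin_const_smul h.1 c).1
    rw [hG, hadd.2, hsub.2, (hasMellin_const_smul h₀.1 c₀).2, (hasMellin_const_smul h.1 c).2,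
      h₀.2, h.2, smul_eq_mul, smul_eq_mul, mul_one_div, mul_one_div, ← sub_eq_add_neg]

variable {ι : Type*} {A : ι → ℂ} {r : ι → ℝ}

theorem continuousOn_tsum_mul_exp_neg_sq
    (hA : ∀ t > 0, Summable fun i => ‖A i * Real.exp (-Real.pi * r i ^ 2 * t)‖) :
    ContinuousOn (fun t : ℝ => ∑' i, A i * Real.exp (-Real.pi * r i ^ 2 * t)) (Ioi 0) := by
  intro t ht
  have hcont : ContinuousOn (fun t : ℝ => ∑' i, A i * Real.exp (-Real.pi * r i ^ 2 * t))
      (Ioi (t / 2)) := by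
    refine continuousOn_tsum (fun i => by fun_prop) (hA (t / 2) (half_pos ht)) fun i x hx => ?_
    simp only [norm_mul, Complex.norm_real, Real.norm_eq_abs, Real.abs_exp]
    gcongr ‖A i‖ * Real.exp ?_
    have hc : 0 ≤ Real.pi * r i ^ 2 := by positivity
    nlinarith [mem_Ioi.1 hx]
  exact (hcont.continuousAt (Ioi_mem_nhds (half_lt_self ht))).continuousWithinAt

theorem isBigO_tsum_mul_exp_neg_sq (hr : ∀ i, 1 ≤ r i)
    (hA : Summable fun i => ‖A i * Real.exp (-Real.pi * r i ^ 2 * 1)‖) :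
    (fun t : ℝ => ∑' i, A i * Real.exp (-Real.pi * r i ^ 2 * t)) =O[atTop]
      fun t => Real.exp (-Real.pi * t) := by
  refine IsBigO.of_bound (∑' i, ‖A i * Real.exp (-Real.pi * r i ^ 2 * 1)‖ * Real.exp Real.pi) ?_
  filter_upwards [eventually_ge_atTop 1] with t ht
  rw [Real.norm_eq_abs, Real.abs_exp, ← tsum_mul_right]
  refine tsum_of_norm_bounded ((hA.mul_right _).mul_right _).hasSum fun i => ?_
  simp only [norm_mul, Complex.norm_real, Real.norm_eq_abs, Real.abs_exp, mul_assoc ‖A i‖,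
    ← Real.exp_add]
  gcongr ‖A i‖ * Real.exp ?_
  have hr2 : 1 ≤ r i ^ 2 := one_le_pow₀ (hr i)
  nlinarith [mul_nonneg Real.pi_pos.le (mul_nonneg (sub_nonneg.2 hr2) (sub_nonneg.2 ht))]

theorem mellin_tsum_mul_exp_neg_sq [Countable ι] (hr : ∀ i, 1 ≤ r i) {s : ℂ} (hs : 0 < s.re)
    (hD : Summable fun i => ‖A i‖ / r i ^ s.re)
    (hA : ∀ t > 0, Summable fun i => ‖A i * Real.exp (-Real.pi * r i ^ 2 * t)‖) :
    mellin (fun t : ℝ => ∑' i, A i * Real.exp (-Real.pi * r i ^ 2 * t)) (s / 2) =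
      Complex.Gammaℝ s * ∑' i, A i / (r i : ℂ) ^ s := by
  have hr_ne : ∀ i, r i ≠ 0 := fun i => (one_pos.trans_le (hr i)).ne'
  have habs : ∀ i, |r i| = r i := fun i => abs_of_pos (one_pos.trans_le (hr i))
  have hsum := hasSum_mellin_pi_mul_sq (a := A) (r := r) hs
    (fun t ht => by simpa only [hr_ne, if_false] using (hA t ht).of_norm.hasSum)
    (by simpa only [habs] using hD)
  simpa only [habs, mul_div_assoc, tsum_mul_left] using hsum.tsum_eq.symm

theorem differentiable_Gammaℝ_add_two_inv :
    Differentiable ℂ fun s : ℂ => (Complex.Gammaℝ (s + 2))⁻¹ :=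
  Complex.differentiable_Gammaℝ_inv.comp (differentiable_id.add_const 2)

theorem exists_differentiable_eq_sub_mul_tsum_div_cpow [Countable ι] (hr : ∀ i, 1 ≤ r i)
    {a : ℝ} (ha : 0 ≤ a) (hD : ∀ σ > a, Summable fun i => ‖A i‖ / r i ^ σ)
    (hA : ∀ t > 0, Summable fun i => ‖A i * Real.exp (-Real.pi * r i ^ 2 * t)‖) {c c₀ : ℂ}
    (hbot : ∀ M : ℕ, (fun t : ℝ => ∑' i, A i * Real.exp (-Real.pi * r i ^ 2 * t) + c₀ -
      c * (t : ℂ) ^ (-(a / 2 : ℂ))) =O[𝓝[>] 0] fun t => t ^ M) :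
    ∃ H : ℂ → ℂ, Differentiable ℂ H ∧
      ∀ s : ℂ, a < s.re → H s = (s - a) * ∑' i, A i / (r i : ℂ) ^ s := by
  obtain ⟨F, hF, hmellin⟩ := exists_differentiable_mellin_eq
    ((continuousOn_tsum_mul_exp_neg_sq hA).locallyIntegrableOn measurableSet_Ioi) Real.pi_pos
    (isBigO_tsum_mul_exp_neg_sq hr (hA 1 one_pos)) hbot
  have := Complex.differentiable_Gammaℝ_inv
  have := differentiable_Gammaℝ_add_two_inv
  refine ⟨fun s => (s - a) * (F (s / 2) * (Complex.Gammaℝ s)⁻¹ -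
    c₀ / Real.pi * (Complex.Gammaℝ (s + 2))⁻¹) + 2 * c * (Complex.Gammaℝ s)⁻¹, by fun_prop,
    fun s hs => ?_⟩
  have hs0 : 0 < s.re := ha.trans_lt hs
  have hs_ne : s ≠ 0 := fun h => by simp [h] at hs0
  have hsa : s - a ≠ 0 := fun h => by simp [sub_eq_zero.1 h] at hs
  have hΓ_ne := Complex.Gammaℝ_ne_zero_of_re_pos hs0
  have hre : a / 2 < s.re / 2 := by linarith
  have hsum := mellin_tsum_mul_exp_neg_sq hr hs0 (hD _ hs) hA
  rw [hmellin (s / 2) (by simpa using hs0) (by simpa using hre), mul_comm] at hsum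
  beta_reduce
  rw [eq_div_of_mul_eq hΓ_ne hsum.symm, Complex.Gammaℝ_add_two hs_ne]
  field_simp

end MellinContinuation

section TwistedZeta

open scoped FourierTransform

/-- The nonzero vectors of `ℤⁿ`. -/
abbrev PuncturedLattice (n : ℕ) : Type := {k : Fin n → ℤ // k ≠ 0}

theorem PuncturedLattice.znorm_pos {n : ℕ} (k : PuncturedLattice n) : 0 < znorm k.1 :=
  one_pos.trans_le (one_le_znorm k.2)

/-- Symbols of order `D`: functions `φ l k` of size `O(|k|ᴰ)`, with a constant depending
polynomially on `l`. -/
def symbols (Λ : Type*) [SeminormedAddGroup Λ] (n : ℕ) (D : ℤ) :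
    Submodule ℂ (Λ → PuncturedLattice n → ℂ) where
  carrier := {φ | ∃ c : Λ → ℝ, IsSlowlyIncreasing c ∧ ∀ l k, ‖φ l k‖ ≤ c l * znorm k.1 ^ D}
  zero_mem' := ⟨0, isSlowlyIncreasing_const 0, by simp⟩
  add_mem' := by
    rintro φ ψ ⟨c, hc, h⟩ ⟨c', hc', h'⟩
    refine ⟨_, hc.add hc', fun l k => (norm_add_le _ _).trans ?_⟩
    rw [add_mul]
    exact add_le_add (h l k) (h' l k)
  smul_mem' := by
    rintro a φ ⟨c, hc, h⟩
    refine ⟨_, (isSlowlyIncreasing_const ‖a‖).mul hc, fun l k => ?_⟩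
    rw [Pi.smul_apply, Pi.smul_apply, norm_smul, mul_assoc]
    gcongr
    exact h l k

variable {Λ : Type*} {n : ℕ} {b : Λ → ℂ} {y : Λ → Fin n → ℝ}

/-- The general term of `twistedZeta`. -/
def zetaTerm (b : Λ → ℂ) (y : Λ → Fin n → ℝ) (φ : Λ → PuncturedLattice n → ℂ) (s : ℂ)
    (x : Λ × PuncturedLattice n) : ℂ :=
  b x.1 * φ x.1 x.2 * 𝐞 (∑ i, x.2.1 i * y x.1 i) * (znorm x.2.1 : ℂ) ^ (-s)

/-- The zeta function `∑ b_l φ_l(k) e(k·y_l) |k|⁻ˢ` over `l ∈ Λ` and `k ∈ ℤⁿ ∖ {0}`. -/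
def twistedZeta (b : Λ → ℂ) (y : Λ → Fin n → ℝ) (φ : Λ → PuncturedLattice n → ℂ) (s : ℂ) : ℂ :=
  ∑' x, zetaTerm b y φ s x

theorem norm_zetaTerm (φ : Λ → PuncturedLattice n → ℂ) (s : ℂ) (x : Λ × PuncturedLattice n) :
    ‖zetaTerm b y φ s x‖ = ‖b x.1‖ * ‖φ x.1 x.2‖ * znorm x.2.1 ^ (-s.re) := by
  rw [zetaTerm, norm_mul, norm_mul, norm_mul, Circle.norm_coe, mul_one,
    Complex.norm_cpow_eq_rpow_re_of_pos x.2.znorm_pos, Complex.neg_re]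

variable [SeminormedAddGroup Λ] {D : ℤ} {φ : Λ → PuncturedLattice n → ℂ}

theorem IsRapidlyDecreasing.exists_summable_forall_norm_zetaTerm_le (hb : IsRapidlyDecreasing b)
    (y : Λ → Fin n → ℝ) (hφ : φ ∈ symbols Λ n D) {σ : ℝ} (hσ : (n + D : ℝ) < σ) :
    ∃ u : Λ × PuncturedLattice n → ℝ, Summable u ∧
      ∀ s : ℂ, σ ≤ s.re → ∀ x, ‖zetaTerm b y φ s x‖ ≤ u x := by
  obtain ⟨c, hc, hφ⟩ := hφ
  have hbc := (hb.mul_isSlowlyIncreasing (c := fun l => (c l : ℂ))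
    (by simpa [IsSlowlyIncreasing] using hc)).summable_norm
  have hk : Summable fun k : PuncturedLattice n => znorm k.1 ^ (D - σ) :=
    summable_znorm_rpow (by linarith)
  refine ⟨_, hbc.mul_of_nonneg hk (fun _ => norm_nonneg _) fun k =>
    Real.rpow_nonneg k.znorm_pos.le _, fun s hs ⟨l, k⟩ => ?_⟩
  have hk₀ := k.znorm_pos
  calc ‖zetaTerm b y φ s (l, k)‖ = ‖b l‖ * ‖φ l k‖ * znorm k.1 ^ (-s.re) := norm_zetaTerm ..
    _ ≤ ‖b l‖ * (|c l| * znorm k.1 ^ D) * znorm k.1 ^ (-σ) := by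
      gcongr
      exacts [(hφ l k).trans (by gcongr; exact le_abs_self _), one_le_znorm k.2]
    _ = ‖b l * c l‖ * znorm k.1 ^ (D - σ) := by
      rw [sub_eq_add_neg, Real.rpow_add hk₀, Real.rpow_intCast, norm_mul, Complex.norm_real,
        Real.norm_eq_abs]
      ring

theorem IsRapidlyDecreasing.summable_zetaTerm (hb : IsRapidlyDecreasing b) (y : Λ → Fin n → ℝ)
    (hφ : φ ∈ symbols Λ n D) {s : ℂ} (hs : (n + D : ℝ) < s.re) : Summable (zetaTerm b y φ s) := by
  obtain ⟨u, hu, hle⟩ := hb.exists_summable_forall_norm_zetaTerm_le y hφ hs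
  exact hu.of_norm_bounded (hle s le_rfl)

theorem IsRapidlyDecreasing.differentiableOn_twistedZeta (hb : IsRapidlyDecreasing b)
    (y : Λ → Fin n → ℝ) (hφ : φ ∈ symbols Λ n D) :
    DifferentiableOn ℂ (twistedZeta b y φ) {s | (n + D : ℝ) < s.re} := by
  intro s hs
  obtain ⟨σ, hσ, hσs⟩ := exists_between (show (n + D : ℝ) < s.re from hs)
  obtain ⟨u, hu, hle⟩ := hb.exists_summable_forall_norm_zetaTerm_le y hφ hσ
  have hopen : IsOpen {s : ℂ | σ < s.re} := isOpen_lt continuous_const Complex.continuous_re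
  have hdiff : ∀ x, DifferentiableOn ℂ (fun s => zetaTerm b y φ s x) {s | σ < s.re} := fun x => by
    have hx : (znorm x.2.1 : ℂ) ≠ 0 := Complex.ofReal_ne_zero.2 x.2.znorm_pos.ne'
    have := (differentiable_id.neg (𝕜 := ℂ)).const_cpow (.inl hx)
    exact (this.const_mul _).differentiableOn
  have := Complex.differentiableOn_tsum_of_summable_norm hu hdiff hopen fun x s hs =>
    hle s (show σ < s.re from hs).le x
  exact (this.differentiableAt (hopen.mem_nhds hσs)).differentiableWithinAt

end TwistedZeta

section MonomialZeta

open Asymptotics Polynomial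
open scoped FourierTransform

variable {n : ℕ}

/-- The monomial `k₁^α₁ ⋯ kₙ^αₙ` on `ℤⁿ`. -/
def latticeMonomial (α : Fin n → ℕ) (k : Fin n → ℤ) : ℂ := ∏ i, (k i : ℂ) ^ α i

theorem norm_latticeMonomial_le (α : Fin n → ℕ) (k : Fin n → ℤ) :
    ‖latticeMonomial α k‖ ≤ znorm k ^ ∑ i, α i := by
  rw [latticeMonomial, norm_prod, ← Finset.prod_pow_eq_pow_sum]
  refine Finset.prod_le_prod (fun i _ => norm_nonneg _) fun i _ => ?_
  rw [norm_pow]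
  gcongr
  simpa using abs_le_znorm k i

/-- The general term of the theta series attached to a monomial and a phase `y`. -/
def thetaTerm (α : Fin n → ℕ) (y : Fin n → ℝ) (t : ℝ) (k : Fin n → ℤ) : ℂ :=
  latticeMonomial α k * 𝐞 (∑ i, k i * y i) * Real.exp (-Real.pi * znorm k ^ 2 * t)

theorem norm_thetaTerm (α : Fin n → ℕ) (y : Fin n → ℝ) (t : ℝ) (k : Fin n → ℤ) :
    ‖thetaTerm α y t k‖ = ‖latticeMonomial α k‖ * Real.exp (-Real.pi * znorm k ^ 2 * t) := by
  rw [thetaTerm, norm_mul, norm_mul, Circle.norm_coe, mul_one, Complex.norm_real,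
    Real.norm_of_nonneg (Real.exp_pos _).le]

theorem thetaTerm_zero (α : Fin n → ℕ) (y : Fin n → ℝ) (t : ℝ) :
    thetaTerm α y t 0 = latticeMonomial α 0 := by
  simp [thetaTerm, znorm]

theorem prod_polynomialGaussian_mul_fourierChar (α : Fin n → ℕ) (y : Fin n → ℝ) (h : ℝ)
    (k : Fin n → ℤ) :
    ∏ i, polynomialGaussian (X ^ α i) (h * k i) * 𝐞 (k i * y i) =
      (h : ℂ) ^ (∑ i, α i) * thetaTerm α y (h ^ 2) k := by
  have hexp : ∏ i, Complex.exp (-Real.pi * ((h * k i : ℝ) : ℂ) ^ 2) =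
      Real.exp (-Real.pi * znorm k ^ 2 * h ^ 2) := by
    rw [← Complex.exp_sum, Complex.ofReal_exp, znorm_sq, Finset.mul_sum, Finset.sum_mul]
    push_cast
    congr 1
    exact Finset.sum_congr rfl fun i _ => by ring
  have hchar : ∏ i, (𝐞 (k i * y i) : ℂ) = 𝐞 (∑ i, k i * y i) := by
    simp only [Real.fourierChar_apply, ← Complex.exp_sum, Complex.ofReal_sum, Finset.mul_sum,
      Finset.sum_mul]
  simp only [polynomialGaussian_X_pow_apply, Finset.prod_mul_distrib, hexp, hchar, thetaTerm,
    latticeMonomial]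
  simp only [Complex.ofReal_mul, mul_pow, Finset.prod_mul_distrib, Finset.prod_pow_eq_pow_sum,
    Complex.ofReal_intCast]
  ring

theorem summable_norm_thetaTerm (α : Fin n → ℕ) (y : Fin n → ℝ) {t : ℝ} (ht : 0 < t) :
    Summable fun k => ‖thetaTerm α y t k‖ := by
  have hh := Real.sqrt_pos.2 ht
  have := summable_norm_prod_pi fun i =>
    summable_norm_comp_mul_int (polynomialGaussian (X ^ α i)) hh.ne' (y i)
  simp only [prod_polynomialGaussian_mul_fourierChar, Real.sq_sqrt ht.le, norm_mul] at this
  exact (summable_mul_left_iff (by simpa using fun h => absurd h hh.ne')).1 this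

theorem prod_twistedRiemannSum_polynomialGaussian (α : Fin n → ℕ) (y : Fin n → ℝ) {h : ℝ}
    (hh : h ≠ 0) :
    ∏ i, twistedRiemannSum (polynomialGaussian (X ^ α i)) h (y i) =
      (h : ℂ) ^ (n + ∑ i, α i) * ∑' k, thetaTerm α y (h ^ 2) k := by
  simp only [twistedRiemannSum, Finset.prod_mul_distrib, Finset.prod_const, Finset.card_univ,
    Fintype.card_fin]
  rw [← tsum_prod_pi fun i =>
    summable_norm_comp_mul_int (polynomialGaussian (X ^ α i)) hh (y i)]
  simp only [prod_polynomialGaussian_mul_fourierChar, tsum_mul_left, pow_add, mul_assoc]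

variable {Λ : Type*} {b : Λ → ℂ}

theorem PuncturedLattice.injective_prodMap_val :
    Function.Injective fun x : Λ × PuncturedLattice n => (x.1, x.2.1) :=
  Function.injective_id.prodMap Subtype.val_injective

theorem summable_norm_mul_thetaTerm (hb : Summable fun l => ‖b l‖) (y : Λ → Fin n → ℝ)
    (α : Fin n → ℕ) {t : ℝ} (ht : 0 < t) :
    Summable fun x : Λ × (Fin n → ℤ) => ‖b x.1 * thetaTerm α (y x.1) t x.2‖ := by
  refine (hb.mul_of_nonneg (summable_norm_thetaTerm α 0 ht) (fun _ => norm_nonneg _)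
    fun _ => norm_nonneg _).congr fun x => ?_
  rw [norm_mul, norm_thetaTerm, norm_thetaTerm]

theorem tsum_mul_tsum_thetaTerm (hb : Summable fun l => ‖b l‖) (y : Λ → Fin n → ℝ)
    (α : Fin n → ℕ) {t : ℝ} (ht : 0 < t) :
    ∑' l, b l * ∑' k, thetaTerm α (y l) t k =
      ∑' x : Λ × PuncturedLattice n, b x.1 * thetaTerm α (y x.1) t x.2.1 +
        ∑' l, b l * latticeMonomial α 0 := by
  have hsum := (summable_norm_mul_thetaTerm hb y α ht).of_norm
  have hpunct : Summable fun x : Λ × PuncturedLattice n => b x.1 * thetaTerm α (y x.1) t x.2.1 :=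
    (hsum.comp_injective PuncturedLattice.injective_prodMap_val :)
  rw [hpunct.tsum_prod, ← hpunct.prod.tsum_add (hb.of_norm.mul_right _)]
  refine tsum_congr fun l => ?_
  have hl := (summable_norm_thetaTerm α (y l) ht).of_norm
  have hsplit : ∑' k, thetaTerm α (y l) t k =
      latticeMonomial α 0 + ∑' k : PuncturedLattice n, thetaTerm α (y l) t k.1 := by
    rw [← hl.tsum_subtype_add_tsum_subtype_compl {0}, tsum_singleton, thetaTerm_zero]
    rfl
  rw [hsplit, mul_add, ← tsum_mul_left, add_comm]

variable [SeminormedAddGroup Λ] {y : Λ → Fin n → ℝ}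

theorem IsRapidlyDecreasing.exists_isBigO_tsum_thetaTerm_sub (hb : IsRapidlyDecreasing b)
    (hy : IsDiophantinePhase y) (α : Fin n → ℕ) :
    ∃ c : ℂ, ∀ M : ℕ, (fun t : ℝ =>
      ∑' x : Λ × PuncturedLattice n, b x.1 * thetaTerm α (y x.1) t x.2.1 +
        ∑' l, b l * latticeMonomial α 0 - c * (t : ℂ) ^ (-((n + ∑ i, α i : ℕ) / 2 : ℂ)))
      =O[𝓝[>] 0] fun t => t ^ M := by
  set d := n + ∑ i, α i
  set f := fun i => polynomialGaussian (X ^ α i)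
  set c : ℂ := ∑' l, b l * twistedRiemannLimit f (y l)
  refine ⟨c, fun M => ?_⟩
  have hsqrt : Tendsto Real.sqrt (𝓝[>] 0) (𝓝[>] 0) := tendsto_nhdsWithin_iff.2
    ⟨(Real.continuous_sqrt.tendsto' 0 0 Real.sqrt_zero).mono_left nhdsWithin_le_nhds,
      eventually_mem_nhdsWithin.mono fun _ => Real.sqrt_pos.2⟩
  have hO := ((hb.isBigO_tsum_prod_twistedRiemannSum_sub hy f (2 * M + d)).comp_tendsto
    hsqrt).mul (isBigO_refl (fun t => ((√t : ℂ) ^ d)⁻¹) _).norm_right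
  have hpow : (fun t : ℝ => √t ^ (2 * M + d) * ‖((√t : ℂ) ^ d)⁻¹‖) =ᶠ[𝓝[>] 0] fun t => t ^ M := by
    filter_upwards [self_mem_nhdsWithin] with t (ht : 0 < t)
    have hh := Real.sqrt_pos.2 ht
    rw [norm_inv, norm_pow, Complex.norm_real, Real.norm_of_nonneg hh.le, pow_add, pow_mul,
      Real.sq_sqrt ht.le, mul_inv_cancel_right₀ (pow_pos hh d).ne']
  refine hO.congr' ?_ hpow
  · filter_upwards [self_mem_nhdsWithin] with t (ht : 0 < t)
    have hh := Real.sqrt_pos.2 ht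
    have hd : (√t : ℂ) ^ d ≠ 0 := pow_ne_zero _ (Complex.ofReal_ne_zero.2 hh.ne')
    have hcpow : (t : ℂ) ^ (-(d / 2 : ℂ)) = ((√t : ℂ) ^ d)⁻¹ := by
      have := Complex.ofReal_cpow ht.le (d / 2 : ℝ)
      rw [Real.rpow_div_two_eq_sqrt _ ht.le, Real.rpow_natCast] at this
      rw [Complex.cpow_neg]
      push_cast at this
      rw [this]
    have hprod : ∑' l, b l * ∏ i, twistedRiemannSum (f i) √t (y l i) =
        (√t : ℂ) ^ d * ∑' l, b l * ∑' k, thetaTerm α (y l) t k := by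
      rw [← tsum_mul_left]
      refine tsum_congr fun l => ?_
      rw [prod_twistedRiemannSum_polynomialGaussian α (y l) hh.ne', Real.sq_sqrt ht.le]
      ring
    rw [Function.comp_apply, hprod, ← tsum_mul_tsum_thetaTerm hb.summable_norm y α ht, hcpow,
      sub_mul, mul_right_comm, mul_inv_cancel₀ hd, one_mul]

theorem latticeMonomial_mem_symbols (α : Fin n → ℕ) :
    (fun _ k => latticeMonomial α k.1) ∈ symbols Λ n (∑ i, α i : ℕ) :=
  ⟨fun _ => 1, isSlowlyIncreasing_const 1, fun _ k => by
    rw [one_mul, zpow_natCast]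
    exact norm_latticeMonomial_le α k.1⟩

theorem IsRapidlyDecreasing.exists_differentiable_eq_sub_mul_twistedZeta_monomial [Countable Λ]
    (hb : IsRapidlyDecreasing b) (hy : IsDiophantinePhase y) (α : Fin n → ℕ) :
    ∃ H : ℂ → ℂ, Differentiable ℂ H ∧ ∀ s : ℂ, (n + ∑ i, α i : ℕ) < s.re →
      H s = (s - (n + ∑ i, α i : ℕ)) * twistedZeta b y (fun _ k => latticeMonomial α k.1) s := by
  obtain ⟨c, hc⟩ := hb.exists_isBigO_tsum_thetaTerm_sub hy α
  set A : Λ × PuncturedLattice n → ℂ := fun x =>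
    b x.1 * latticeMonomial α x.2.1 * 𝐞 (∑ i, x.2.1 i * y x.1 i)
  have hzeta : ∀ s x, zetaTerm b y (fun _ k => latticeMonomial α k.1) s x =
      A x / (znorm x.2.1 : ℂ) ^ s := fun s x => by
    rw [zetaTerm, Complex.cpow_neg, div_eq_mul_inv]
  have htheta : ∀ t x, A x * Real.exp (-Real.pi * znorm x.2.1 ^ 2 * t) =
      b x.1 * thetaTerm α (y x.1) t x.2.1 := fun t x => by
    simp only [A, thetaTerm]
    ring
  have := exists_differentiable_eq_sub_mul_tsum_div_cpow (A := A) (r := fun x => znorm x.2.1)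
    (fun x => one_le_znorm x.2.2) (Nat.cast_nonneg (n + ∑ i, α i)) (fun σ hσ => ?_)
    (fun t ht => ?_) (by simpa only [htheta, Complex.ofReal_natCast] using hc)
  · simpa only [hzeta, twistedZeta, Complex.ofReal_natCast] using this
  · have hs := (hb.summable_zetaTerm y (latticeMonomial_mem_symbols α) (s := σ)
      (by simpa using hσ)).norm
    refine hs.congr fun x => ?_
    rw [hzeta, norm_div, Complex.norm_cpow_eq_rpow_re_of_pos x.2.znorm_pos, Complex.ofReal_re]
  · simp only [htheta]
    exact ((summable_norm_mul_thetaTerm hb.summable_norm y α ht).comp_injective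
      PuncturedLattice.injective_prodMap_val :)

end MonomialZeta

section ClassicalSymbols

variable {Λ : Type*} {n : ℕ}

/-- The symbol `c_l k^α |k|ᵐ`, homogeneous of degree `|α| + m` in `k`. -/
def homogeneousSymbol (c : Λ → ℂ) (α : Fin n → ℕ) (m : ℤ) (l : Λ) (k : PuncturedLattice n) : ℂ :=
  c l * latticeMonomial α k.1 * (znorm k.1 : ℂ) ^ m

theorem homogeneousSymbol_mul (c c' : Λ → ℂ) (α α' : Fin n → ℕ) (m m' : ℤ) :
    homogeneousSymbol c α m * homogeneousSymbol c' α' m' =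
      homogeneousSymbol (fun l => c l * c' l) (α + α') (m + m') := by
  funext l k
  have hk : (znorm k.1 : ℂ) ≠ 0 := Complex.ofReal_ne_zero.2 k.znorm_pos.ne'
  simp only [Pi.mul_apply, homogeneousSymbol, latticeMonomial, Pi.add_apply, pow_add,
    Finset.prod_mul_distrib, zpow_add₀ hk]
  ring

variable [SeminormedAddGroup Λ]

theorem mem_symbols_of_norm_le {D : ℤ} {φ ψ : Λ → PuncturedLattice n → ℂ} (hφ : φ ∈ symbols Λ n D)
    {C : ℝ} (hC : 0 ≤ C) (h : ∀ l k, ‖ψ l k‖ ≤ C * ‖φ l k‖) : ψ ∈ symbols Λ n D := by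
  obtain ⟨c, hc, hφ⟩ := hφ
  refine ⟨_, (isSlowlyIncreasing_const C).mul hc, fun l k => (h l k).trans ?_⟩
  rw [mul_assoc]
  gcongr
  exact hφ l k

theorem symbols_mono : Monotone (symbols Λ n) := by
  rintro D D' hD φ ⟨c, ⟨C, M, hC⟩, hφ⟩
  refine ⟨fun l => |c l|, ⟨C, M, by simpa using hC⟩, fun l k => (hφ l k).trans ?_⟩
  have := k.znorm_pos
  gcongr
  exacts [le_abs_self _, one_le_znorm k.2]

theorem symbols_mul_symbols_le (D D' : ℤ) :
    symbols Λ n D * symbols Λ n D' ≤ symbols Λ n (D + D') := by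
  rw [Submodule.mul_le]
  rintro φ ⟨c, hc, hφ⟩ ψ ⟨c', hc', hψ⟩
  refine ⟨_, hc.mul hc', fun l k => ?_⟩
  calc ‖(φ * ψ) l k‖ = ‖φ l k‖ * ‖ψ l k‖ := norm_mul _ _
    _ ≤ (c l * znorm k.1 ^ D) * (c' l * znorm k.1 ^ D') :=
      mul_le_mul (hφ l k) (hψ l k) (norm_nonneg _) ((norm_nonneg _).trans (hφ l k))
    _ = c l * c' l * znorm k.1 ^ (D + D') := by rw [zpow_add₀ k.znorm_pos.ne']; ring

variable (Λ n) in
/-- Finite sums of homogeneous symbols of degree at most `D` with slowly increasing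
coefficients. -/
def polyhomogeneousSymbols (D : ℤ) : Submodule ℂ (Λ → PuncturedLattice n → ℂ) :=
  Submodule.span ℂ {φ | ∃ (c : Λ → ℂ) (α : Fin n → ℕ) (m : ℤ), IsSlowlyIncreasing c ∧
    (∑ i, α i : ℕ) + m ≤ D ∧ φ = homogeneousSymbol c α m}

theorem homogeneousSymbol_mem {c : Λ → ℂ} (hc : IsSlowlyIncreasing c) {α : Fin n → ℕ} {m D : ℤ}
    (hD : (∑ i, α i : ℕ) + m ≤ D) : homogeneousSymbol c α m ∈ polyhomogeneousSymbols Λ n D :=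
  Submodule.subset_span ⟨c, α, m, hc, hD, rfl⟩

theorem polyhomogeneousSymbols_mono : Monotone (polyhomogeneousSymbols Λ n) := by
  refine fun D D' hD => Submodule.span_mono ?_
  rintro _ ⟨c, α, m, hc, hα, rfl⟩
  exact ⟨c, α, m, hc, hα.trans hD, rfl⟩

theorem homogeneousSymbol_mem_symbols {c : Λ → ℂ} (hc : IsSlowlyIncreasing c) {α : Fin n → ℕ}
    {m D : ℤ} (hD : (∑ i, α i : ℕ) + m ≤ D) : homogeneousSymbol c α m ∈ symbols Λ n D := by
  refine symbols_mono hD ⟨fun l => ‖c l‖, by simpa [IsSlowlyIncreasing] using hc, fun l k => ?_⟩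
  rw [homogeneousSymbol, norm_mul, norm_mul, norm_zpow, Complex.norm_real,
    Real.norm_of_nonneg (znorm_nonneg _), zpow_add₀ k.znorm_pos.ne', zpow_natCast, ← mul_assoc]
  have := k.znorm_pos
  gcongr
  exact norm_latticeMonomial_le α k.1

theorem polyhomogeneousSymbols_le_symbols (D : ℤ) :
    polyhomogeneousSymbols Λ n D ≤ symbols Λ n D := by
  rw [polyhomogeneousSymbols, Submodule.span_le]
  rintro _ ⟨c, α, m, hc, hα, rfl⟩
  exact homogeneousSymbol_mem_symbols hc hα

instance polyhomogeneousSymbols.gradedMonoid :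
    SetLike.GradedMonoid (polyhomogeneousSymbols Λ n) where
  one_mem := by
    convert homogeneousSymbol_mem (isSlowlyIncreasing_const (1 : ℂ)) (α := 0) (m := 0) (D := 0)
      (by simp) using 1
    funext l k
    simp [homogeneousSymbol, latticeMonomial]
  mul_mem D D' φ ψ hφ hψ := by
    have h := Submodule.mul_mem_mul hφ hψ
    rw [polyhomogeneousSymbols, polyhomogeneousSymbols, Submodule.span_mul_span] at h
    refine Submodule.span_mono ?_ h
    rintro _ ⟨_, ⟨c, α, m, hc, hα, rfl⟩, _, ⟨c', α', m', hc', hα', rfl⟩, rfl⟩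
    refine ⟨_, α + α', m + m', hc.mul hc', ?_, homogeneousSymbol_mul ..⟩
    simp only [Pi.add_apply, Finset.sum_add_distrib]
    omega

variable (Λ n) in
/-- Classical symbols of order `D`: to every order `N`, sums of homogeneous symbols up to an error
which is a symbol of order `D - N`. -/
def classicalSymbols (D : ℤ) : Submodule ℂ (Λ → PuncturedLattice n → ℂ) :=
  ⨅ N : ℕ, polyhomogeneousSymbols Λ n D ⊔ symbols Λ n (D - N)

theorem polyhomogeneousSymbols_le_classicalSymbols (D : ℤ) :
    polyhomogeneousSymbols Λ n D ≤ classicalSymbols Λ n D :=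
  le_iInf fun _ => le_sup_left

theorem classicalSymbols_le_symbols (D : ℤ) : classicalSymbols Λ n D ≤ symbols Λ n D :=
  (iInf_le _ 0).trans (sup_le (polyhomogeneousSymbols_le_symbols D) (by simp))

instance classicalSymbols.gradedMonoid : SetLike.GradedMonoid (classicalSymbols Λ n) where
  one_mem := polyhomogeneousSymbols_le_classicalSymbols 0 SetLike.GradedOne.one_mem
  mul_mem D D' φ ψ hφ hψ := by
    refine Submodule.mem_iInf _ |>.2 fun N => ?_
    obtain ⟨φ₀, hφ₀, φ₁, hφ₁, rfl⟩ := Submodule.mem_sup.1 ((Submodule.mem_iInf _).1 hφ N)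
    have hψ' := classicalSymbols_le_symbols D' hψ
    obtain ⟨ψ₀, hψ₀, ψ₁, hψ₁, rfl⟩ := Submodule.mem_sup.1 ((Submodule.mem_iInf _).1 hψ N)
    have h₁ := symbols_mul_symbols_le _ _
      (Submodule.mul_mem_mul (polyhomogeneousSymbols_le_symbols D hφ₀) hψ₁)
    have h₂ := symbols_mul_symbols_le _ _ (Submodule.mul_mem_mul hφ₁ hψ')
    rw [← add_sub_assoc] at h₁
    rw [sub_add_eq_add_sub] at h₂
    rw [add_mul, mul_add, add_assoc]
    exact Submodule.add_mem_sup (SetLike.mul_mem_graded hφ₀ hψ₀) (add_mem h₁ h₂)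

theorem eval_mem_polyhomogeneousSymbols (Q : MvPolynomial (Fin n) ℝ) :
    (fun (_ : Λ) k => ((Q.eval fun i => (k.1 i : ℝ) : ℝ) : ℂ)) ∈
      polyhomogeneousSymbols Λ n Q.totalDegree := by
  have hQ : (fun (_ : Λ) (k : PuncturedLattice n) => ((Q.eval fun i => (k.1 i : ℝ) : ℝ) : ℂ)) =
      ∑ α ∈ Q.support, homogeneousSymbol (fun _ => ((Q.coeff α : ℝ) : ℂ)) α 0 := by
    funext l k
    simp [MvPolynomial.eval_eq', Finset.sum_apply, homogeneousSymbol, latticeMonomial]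
  rw [hQ]
  refine sum_mem fun α hα => homogeneousSymbol_mem (isSlowlyIncreasing_const _) ?_
  have := MvPolynomial.le_totalDegree hα
  rw [Finsupp.sum_fintype _ _ fun _ => rfl] at this
  exact_mod_cast this

end ClassicalSymbols

section ShiftedNorm

open Polynomial

theorem exists_abs_eval_le_mul_one_add_pow (q : ℝ[X]) {d : ℕ} (hq : q.natDegree ≤ d) :
    ∃ C, 0 ≤ C ∧ ∀ u, 0 ≤ u → |q.eval u| ≤ C * (1 + u) ^ d := by
  refine ⟨∑ j ∈ Finset.range (d + 1), |q.coeff j|, by positivity, fun u hu => ?_⟩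
  rw [eval_eq_sum_range' (Nat.lt_succ_of_le hq), Finset.sum_mul]
  refine (Finset.abs_sum_le_sum_abs _ _).trans (Finset.sum_le_sum fun j hj => ?_)
  rw [abs_mul, abs_pow, abs_of_nonneg hu]
  gcongr
  calc u ^ j ≤ (1 + u) ^ j := by gcongr; linarith
    _ ≤ (1 + u) ^ d := by
      gcongr
      exacts [by linarith, Nat.le_of_lt_succ (Finset.mem_range.1 hj)]

-- Taylor's formula for `√(1 + x)` in terms of `u = √(1 + x)`, where it is a polynomial identity.
theorem exists_X_eq_comp_add_sub_one_pow_mul (N : ℕ) :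
    ∃ p q : ℝ[X], q.natDegree ≤ N + 1 ∧
      X = p.comp (X ^ 2 - 1) + (X - 1) ^ (N + 1) * q := by
  induction N with
  | zero => exact ⟨1, 1, by simp, by simp⟩
  | succ N ih =>
    obtain ⟨p, q, hq, hp⟩ := ih
    set c := q.eval 1 / 2 ^ (N + 1) with hc
    obtain ⟨r, hr⟩ : X - C 1 ∣ q - C c * (X + 1) ^ (N + 1) := by
      rw [dvd_iff_isRoot]
      simp [hc, one_add_one_eq_two]
    refine ⟨p + C c * X ^ (N + 1), r, ?_, ?_⟩
    · rcases eq_or_ne r 0 with rfl | hr₀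
      · simp
      calc r.natDegree ≤ ((X - C 1) * r).natDegree := by
            rw [(monic_X_sub_C 1).natDegree_mul' hr₀]
            exact Nat.le_add_left _ _
        _ ≤ N + 1 := by
            rw [← hr]
            exact (natDegree_sub_le _ _).trans (max_le hq (by compute_degree))
        _ ≤ N + 1 + 1 := Nat.le_succ _
    · rw [C_1] at hr
      have : q = C c * (X + 1) ^ (N + 1) + (X - 1) * r := by rw [← hr]; ring
      simp only [add_comp, mul_comp, C_comp, pow_comp, X_comp]
      have hpow : (X ^ 2 - 1 : ℝ[X]) ^ (N + 1) = (X - 1) ^ (N + 1) * (X + 1) ^ (N + 1) := by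
        rw [← mul_pow]
        ring
      rw [hpow]
      calc X = p.comp (X ^ 2 - 1) + (X - 1) ^ (N + 1) * q := hp
        _ = _ := by rw [this]; ring

theorem exists_abs_sqrt_one_add_sub_eval_le (N : ℕ) :
    ∃ (p : ℝ[X]) (C : ℝ), 0 ≤ C ∧ ∀ x, -1 ≤ x →
      |√(1 + x) - p.eval x| ≤ C * |x| ^ (N + 1) := by
  obtain ⟨p, q, hq, hp⟩ := exists_X_eq_comp_add_sub_one_pow_mul N
  obtain ⟨C, hC, hqC⟩ := exists_abs_eval_le_mul_one_add_pow q hq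
  refine ⟨p, C, hC, fun x hx => ?_⟩
  set u := √(1 + x)
  have hu : 0 ≤ u := Real.sqrt_nonneg _
  have hx : x = u ^ 2 - 1 := by rw [Real.sq_sqrt (by linarith)]; ring
  have hp : u - p.eval x = (u - 1) ^ (N + 1) * q.eval u := by
    have := congrArg (eval u) hp
    simp only [eval_X, eval_add, eval_comp, eval_sub, eval_pow, eval_one, eval_mul, ← hx] at this
    linarith
  calc |u - p.eval x| = |u - 1| ^ (N + 1) * |q.eval u| := by rw [hp, abs_mul, abs_pow]
    _ ≤ |u - 1| ^ (N + 1) * (C * (1 + u) ^ (N + 1)) := by gcongr; exact hqC u hu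
    _ = C * (|u - 1| * |u + 1|) ^ (N + 1) := by
      rw [abs_of_nonneg (by linarith : 0 ≤ u + 1), mul_pow, add_comm 1 u]
      ring
    _ = C * |x| ^ (N + 1) := by rw [← abs_mul, hx]; ring_nf

variable {Λ : Type*} {n : ℕ}

/-- The quantity `x` such that `|k + v|² = |k|² (1 + x)`. -/
def relativeShift (v : Fin n → ℤ) (k : PuncturedLattice n) : ℝ :=
  (∑ i, (2 * v i * k.1 i + v i ^ 2 : ℝ)) / znorm k.1 ^ 2

theorem one_add_relativeShift (v : Fin n → ℤ) (k : PuncturedLattice n) :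
    1 + relativeShift v k = (znorm (k.1 + v) / znorm k.1) ^ 2 := by
  have hk := (pow_pos k.znorm_pos 2).ne'
  rw [relativeShift, one_add_div hk, div_pow, znorm_sq (k.1 + v), znorm_sq,
    ← Finset.sum_add_distrib]
  congr 1
  refine Finset.sum_congr rfl fun i _ => ?_
  rw [Pi.add_apply]
  push_cast
  ring

theorem znorm_add_eq (v : Fin n → ℤ) (k : PuncturedLattice n) :
    znorm (k.1 + v) = znorm k.1 * √(1 + relativeShift v k) := by
  rw [one_add_relativeShift, Real.sqrt_sq (div_nonneg (znorm_nonneg _) (znorm_nonneg _)),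
    mul_div_cancel₀ _ k.znorm_pos.ne']

theorem neg_one_le_relativeShift (v : Fin n → ℤ) (k : PuncturedLattice n) :
    -1 ≤ relativeShift v k := by
  have : 0 ≤ 1 + relativeShift v k := one_add_relativeShift v k ▸ sq_nonneg _
  linarith

variable [SeminormedAddGroup Λ]

theorem relativeShift_mem_polyhomogeneousSymbols {v : Λ → Fin n → ℤ}
    (hv : ∀ i, IsSlowlyIncreasing fun l => (v l i : ℂ)) :
    (fun l k => (relativeShift (v l) k : ℂ)) ∈ polyhomogeneousSymbols Λ n (-1) := by
  have : (fun l k => (relativeShift (v l) k : ℂ)) =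
      ∑ i, (homogeneousSymbol (fun l => 2 * (v l i : ℂ)) (Pi.single i 1) (-2) +
        homogeneousSymbol (fun l => (v l i : ℂ) * v l i) 0 (-2)) := by
    funext l k
    have hsingle : ∀ i, latticeMonomial (Pi.single i 1) k.1 = k.1 i := fun i => by
      rw [latticeMonomial, Fintype.prod_eq_single i fun j hj => by simp [hj]]
      simp
    simp only [relativeShift, Finset.sum_apply, Pi.add_apply, homogeneousSymbol, hsingle]
    simp only [latticeMonomial, Pi.zero_apply, pow_zero, Finset.prod_const_one, zpow_neg,
      Complex.ofReal_div, Complex.ofReal_sum, Finset.sum_div]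
    refine Finset.sum_congr rfl fun i _ => ?_
    push_cast
    rw [zpow_ofNat]
    ring
  rw [this]
  refine sum_mem fun i _ => add_mem ?_ ?_
  · exact homogeneousSymbol_mem ((isSlowlyIncreasing_const 2).mul (hv i)) (by simp)
  · exact homogeneousSymbol_mem ((hv i).mul (hv i)) (by simp)

theorem znorm_mem_polyhomogeneousSymbols :
    (fun _ k => (znorm k.1 : ℂ)) ∈ polyhomogeneousSymbols Λ n 1 := by
  convert homogeneousSymbol_mem (isSlowlyIncreasing_const (1 : ℂ)) (α := 0) (m := 1) (D := 1)
    (by simp) using 1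
  funext l k
  simp [homogeneousSymbol, latticeMonomial]

theorem aeval_mem_polyhomogeneousSymbols_zero {φ : Λ → PuncturedLattice n → ℂ} {D : ℤ}
    (hφ : φ ∈ polyhomogeneousSymbols Λ n D) (hD : D ≤ 0) (p : ℂ[X]) :
    aeval φ p ∈ polyhomogeneousSymbols Λ n 0 := by
  rw [aeval_eq_sum_range]
  refine sum_mem fun j _ => Submodule.smul_mem _ _ ?_
  exact polyhomogeneousSymbols_mono (nsmul_nonpos hD j) (SetLike.pow_mem_graded j hφ)

theorem znorm_add_mem_classicalSymbols {v : Λ → Fin n → ℤ}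
    (hv : ∀ i, IsSlowlyIncreasing fun l => (v l i : ℂ)) :
    (fun l k => (znorm (k.1 + v l) : ℂ)) ∈ classicalSymbols Λ n 1 := by
  refine (Submodule.mem_iInf _).2 fun N => ?_
  obtain ⟨p, C, hC, hp⟩ := exists_abs_sqrt_one_add_sub_eval_le N
  set X : Λ → PuncturedLattice n → ℂ := fun l k => relativeShift (v l) k
  set ρ : Λ → PuncturedLattice n → ℂ := fun _ k => znorm k.1
  have hX : X ∈ polyhomogeneousSymbols Λ n (-1) := relativeShift_mem_polyhomogeneousSymbols hv
  have hρ : ρ ∈ polyhomogeneousSymbols Λ n 1 := znorm_mem_polyhomogeneousSymbols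
  set ψ := ρ * aeval X (p.map (algebraMap ℝ ℂ))
  have hψ : ψ ∈ polyhomogeneousSymbols Λ n 1 := by
    simpa only [add_zero] using SetLike.mul_mem_graded hρ
      (aeval_mem_polyhomogeneousSymbols_zero hX (by simp) (p.map (algebraMap ℝ ℂ)))
  have hρX : ρ * X ^ (N + 1) ∈ symbols Λ n (1 - N) := by
    refine symbols_mono ?_ <| polyhomogeneousSymbols_le_symbols _ <|
      SetLike.mul_mem_graded hρ (SetLike.pow_mem_graded (N + 1) hX)
    simp
  refine Submodule.mem_sup.2 ⟨ψ, hψ, _, mem_symbols_of_norm_le hρX hC ?_, add_sub_cancel _ _⟩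
  intro l k
  have hψ : ψ l k = (znorm k.1 * p.eval (relativeShift (v l) k) : ℝ) := by
    simp only [ψ, ρ, X, Pi.mul_apply, aeval_eq_sum_range, natDegree_map, coeff_map,
      eval_eq_sum_range, Finset.sum_apply, Pi.smul_apply, Pi.pow_apply, smul_eq_mul]
    push_cast
    rfl
  have hk := znorm_nonneg k.1
  calc ‖(znorm (k.1 + v l) : ℂ) - ψ l k‖
      = znorm k.1 * |√(1 + relativeShift (v l) k) - p.eval (relativeShift (v l) k)| := by
        rw [hψ, znorm_add_eq, ← Complex.ofReal_sub, Complex.norm_real, ← mul_sub, norm_mul,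
          Real.norm_of_nonneg hk, Real.norm_eq_abs]
    _ ≤ znorm k.1 * (C * |relativeShift (v l) k| ^ (N + 1)) := by
        gcongr
        exact hp _ (neg_one_le_relativeShift _ _)
    _ = C * ‖(ρ * X ^ (N + 1)) l k‖ := by
        simp only [ρ, X, Pi.mul_apply, Pi.pow_apply, norm_mul, norm_pow, Complex.norm_real,
          Real.norm_of_nonneg hk, Real.norm_eq_abs]
        ring

end ShiftedNorm

section MeromorphicContinuation

variable {B : ℂ} {N M j : ℕ} {f g H K : ℂ → ℂ} {s : ℂ}

/-- The polynomial with simple zeros at `B, B - 1, …, B - (N - 1)`, which cancels the poles met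
while continuing a zeta function from `B.re < s.re` to `B.re - N < s.re`. -/
def poleFactor (B : ℂ) (N : ℕ) (s : ℂ) : ℂ :=
  ∏ j ∈ Finset.range N, (s - (B - j))

theorem differentiable_poleFactor : Differentiable ℂ (poleFactor B N) := by
  unfold poleFactor
  fun_prop

theorem poleFactor_ne_zero_iff (hs : B.re - N < s.re) :
    poleFactor B N s ≠ 0 ↔ ∀ m : ℕ, s ≠ B - m := by
  simp only [poleFactor, Finset.prod_ne_zero_iff, Finset.mem_range, sub_ne_zero]
  refine ⟨fun h m => ?_, fun h m _ => h m⟩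
  by_cases hm : m < N
  · exact h m hm
  · rintro rfl
    have : (N : ℝ) ≤ m := Nat.cast_le.2 (not_lt.1 hm)
    simp only [Complex.sub_re, Complex.natCast_re] at hs
    linarith

theorem ne_sub_natCast_of_re_lt (hs : B.re < s.re) (m : ℕ) : s ≠ B - m := by
  rintro rfl
  simp only [Complex.sub_re, Complex.natCast_re] at hs
  linarith [m.cast_nonneg (α := ℝ)]

theorem exists_poleFactor_eq_mul (hj : j < N) :
    ∃ P : ℂ → ℂ, Differentiable ℂ P ∧ P (B - j) ≠ 0 ∧
      ∀ s, poleFactor B N s = (s - (B - j)) * P s := by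
  refine ⟨fun s => ∏ i ∈ (Finset.range N).erase j, (s - (B - i)), by fun_prop, ?_, fun s =>
    (Finset.mul_prod_erase _ _ (Finset.mem_range.2 hj)).symm⟩
  refine Finset.prod_ne_zero_iff.2 fun i hi => ?_
  rw [sub_sub_sub_cancel_left, sub_ne_zero]
  exact Nat.cast_injective.ne (Finset.ne_of_mem_erase hi)

theorem isOpen_setOf_lt_re (c : ℝ) : IsOpen {s : ℂ | c < s.re} :=
  isOpen_lt continuous_const Complex.continuous_re

/-- The restriction of `f` to `B.re < s.re` continues meromorphically to `B.re - N < s.re`, with at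
most simple poles, among `B, B - 1, …, B - (N - 1)`; `H` is the continuation freed of its poles. -/
def HasContinuation (B : ℂ) (N : ℕ) (f : ℂ → ℂ) : Prop :=
  ∃ H : ℂ → ℂ, DifferentiableOn ℂ H {s | B.re - N < s.re} ∧
    ∀ s : ℂ, B.re < s.re → H s = poleFactor B N s * f s

namespace HasContinuation

theorem congr (hf : HasContinuation B N f) (h : ∀ s : ℂ, B.re < s.re → g s = f s) :
    HasContinuation B N g := by
  obtain ⟨H, hd, hH⟩ := hf
  exact ⟨H, hd, fun s hs => by rw [hH s hs, h s hs]⟩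

theorem add (hf : HasContinuation B N f) (hg : HasContinuation B N g) :
    HasContinuation B N (fun s => f s + g s) := by
  obtain ⟨H, hd, hH⟩ := hf
  obtain ⟨K, hd', hK⟩ := hg
  exact ⟨_, hd.add hd', fun s hs => by rw [Pi.add_apply, hH s hs, hK s hs, mul_add]⟩

theorem const_mul (c : ℂ) (hf : HasContinuation B N f) :
    HasContinuation B N (fun s => c * f s) := by
  obtain ⟨H, hd, hH⟩ := hf
  exact ⟨_, hd.const_mul c, fun s hs => by rw [hH s hs, mul_left_comm]⟩

theorem of_differentiableOn (hf : DifferentiableOn ℂ f {s | B.re - N < s.re}) :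
    HasContinuation B N f :=
  ⟨_, differentiable_poleFactor.differentiableOn.mul hf, fun _ _ => rfl⟩

theorem of_simplePole (hH : Differentiable ℂ H)
    (hf : ∀ s : ℂ, B.re < s.re → H s = (s - (B - j)) * f s) : HasContinuation B N f := by
  by_cases hj : j < N
  · obtain ⟨P, hP, -, hfactor⟩ := exists_poleFactor_eq_mul (B := B) hj
    exact ⟨_, (hP.mul hH).differentiableOn, fun s hs => by
      rw [Pi.mul_apply, hf s hs, hfactor]
      ring⟩
  have hne : ∀ s : ℂ, B.re - N < s.re → s - (B - j) ≠ 0 := by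
    intro s hs h
    have : (N : ℝ) ≤ j := Nat.cast_le.2 (not_lt.1 hj)
    rw [sub_eq_zero.1 h, Complex.sub_re, Complex.natCast_re] at hs
    linarith
  refine (of_differentiableOn (f := fun s => H s / (s - (B - j)))
    (hH.differentiableOn.div (by fun_prop) hne)).congr fun s hs => ?_
  rw [hf s hs, mul_div_cancel_left₀ _ (sub_ne_zero.2 (ne_sub_natCast_of_re_lt hs j))]

end HasContinuation

theorem poleFactor_mul_eq_poleFactor_mul (hdH : DifferentiableOn ℂ H {s | B.re - N < s.re})
    (hH : ∀ s : ℂ, B.re < s.re → H s = poleFactor B N s * f s)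
    (hdK : DifferentiableOn ℂ K {s | B.re - M < s.re})
    (hK : ∀ s : ℂ, B.re < s.re → K s = poleFactor B M s * f s)
    (hN : B.re - N < s.re) (hM : B.re - M < s.re) :
    poleFactor B M s * H s = poleFactor B N s * K s := by
  set U := {s : ℂ | B.re - N < s.re} ∩ {s : ℂ | B.re - M < s.re}
  have hU : IsOpen U := (isOpen_setOf_lt_re _).inter (isOpen_setOf_lt_re _)
  have hconv : Convex ℝ U := (convex_halfSpace_re_gt _).inter (convex_halfSpace_re_gt _)
  have hdH' : DifferentiableOn ℂ (fun s => poleFactor B M s * H s) U :=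
    differentiable_poleFactor.differentiableOn.mul (hdH.mono Set.inter_subset_left)
  have hdK' : DifferentiableOn ℂ (fun s => poleFactor B N s * K s) U :=
    differentiable_poleFactor.differentiableOn.mul (hdK.mono Set.inter_subset_right)
  have hB : B.re < (B + 1).re := by simp
  have hBU : B + 1 ∈ U :=
    ⟨(sub_le_self _ N.cast_nonneg).trans_lt hB, (sub_le_self _ M.cast_nonneg).trans_lt hB⟩
  refine (hdH'.analyticOnNhd hU).eqOn_of_preconnected_of_eventuallyEq (hdK'.analyticOnNhd hU)
    hconv.isPreconnected hBU ?_ ⟨hN, hM⟩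
  filter_upwards [(isOpen_setOf_lt_re B.re).mem_nhds hB] with s hs
  rw [hH s hs, hK s hs]
  ring

theorem exists_eq_div_poleFactor (hf : ∀ N, HasContinuation B N f) :
    ∃ g : ℂ → ℂ, (∀ s : ℂ, B.re < s.re → g s = f s) ∧
      ∀ N : ℕ, ∃ H : ℂ → ℂ, DifferentiableOn ℂ H {s | B.re - N < s.re} ∧
        ∀ s : ℂ, B.re - N < s.re → poleFactor B N s ≠ 0 → g s = H s / poleFactor B N s := by
  choose H hd hH using hf
  set ν : ℂ → ℕ := fun s => ⌊B.re - s.re⌋₊ + 1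
  have hν : ∀ s : ℂ, B.re - ν s < s.re := fun s => by
    have := Nat.lt_floor_add_one (B.re - s.re)
    push_cast [ν]
    linarith
  refine ⟨fun s => H (ν s) s / poleFactor B (ν s) s, fun s hs => ?_, fun N =>
    ⟨H N, hd N, fun s hs hne => ?_⟩⟩
  · beta_reduce
    rw [hH _ s hs, mul_div_cancel_left₀]
    exact (poleFactor_ne_zero_iff (hν s)).2 (ne_sub_natCast_of_re_lt hs)
  · have hne' : poleFactor B (ν s) s ≠ 0 :=
      (poleFactor_ne_zero_iff (hν s)).2 ((poleFactor_ne_zero_iff hs).1 hne)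
    rw [div_eq_div_iff hne' hne, mul_comm, mul_comm (H N s)]
    exact poleFactor_mul_eq_poleFactor_mul (hd _) (hH _) (hd N) (hH N) (hν s) hs

theorem tendsto_sub_mul_of_eq_div_poleFactor (hj : j < N)
    (hd : DifferentiableOn ℂ H {s | B.re - N < s.re})
    (hg : ∀ s : ℂ, B.re - N < s.re → poleFactor B N s ≠ 0 → g s = H s / poleFactor B N s) :
    ∃ R : ℂ, Tendsto (fun s => (s - (B - j)) * g s) (𝓝[≠] (B - j)) (𝓝 R) := by
  obtain ⟨P, hP, hPj, hfactor⟩ := exists_poleFactor_eq_mul (B := B) hj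
  have hmem : {s : ℂ | B.re - N < s.re} ∈ 𝓝 (B - j) :=
    (isOpen_setOf_lt_re _).mem_nhds (by simpa using hj)
  have hlim : Tendsto (fun s => H s / P s) (𝓝[≠] (B - j)) (𝓝 (H (B - j) / P (B - j))) :=
    ((hd.differentiableAt hmem).continuousAt.div hP.continuous.continuousAt hPj).tendsto.mono_left
      nhdsWithin_le_nhds
  refine ⟨_, hlim.congr' ?_⟩
  filter_upwards [nhdsWithin_le_nhds hmem, self_mem_nhdsWithin,
    nhdsWithin_le_nhds (hP.continuous.continuousAt.eventually_ne hPj)] with s hs hsj hPs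
  have hsj : s - (B - j) ≠ 0 := sub_ne_zero.2 hsj
  rw [hg s hs (by rw [hfactor]; exact mul_ne_zero hsj hPs), hfactor, ← div_div,
    mul_div_assoc', mul_div_cancel₀ _ hsj]

theorem exists_differentiableOn_of_hasContinuation (hf : ∀ N, HasContinuation B N f) :
    ∃ g : ℂ → ℂ, DifferentiableOn ℂ g {s : ℂ | ∀ m : ℕ, s ≠ B - m} ∧
      (∀ s : ℂ, B.re < s.re → g s = f s) ∧
      ∀ m : ℕ, ∃ R : ℂ, Tendsto (fun s => (s - (B - m)) * g s) (𝓝[≠] (B - m)) (𝓝 R) := by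
  obtain ⟨g, hgf, hg⟩ := exists_eq_div_poleFactor hf
  choose H hd hgH using hg
  refine ⟨g, fun s hs => ?_, hgf, fun m =>
    tendsto_sub_mul_of_eq_div_poleFactor m.lt_succ_self (hd _) (hgH _)⟩
  obtain ⟨N, hN⟩ := exists_nat_gt (B.re - s.re)
  have hmem := (isOpen_setOf_lt_re (B.re - N)).mem_nhds (sub_lt_comm.1 hN)
  have hne : poleFactor B N s ≠ 0 := (poleFactor_ne_zero_iff (sub_lt_comm.1 hN)).2 hs
  have hdiff := ((hd N).differentiableAt hmem).div (differentiable_poleFactor s) hne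
  refine (hdiff.congr_of_eventuallyEq ?_).differentiableWithinAt
  filter_upwards [hmem, (differentiable_poleFactor s).continuousAt.eventually_ne hne] with t ht hPt
  exact hgH N t ht hPt

end MeromorphicContinuation

section ZetaContinuation

variable {Λ : Type*} {n : ℕ} {b : Λ → ℂ} {y : Λ → Fin n → ℝ}

theorem twistedZeta_homogeneousSymbol (c : Λ → ℂ) (α : Fin n → ℕ) (m : ℤ) (s : ℂ) :
    twistedZeta b y (homogeneousSymbol c α m) s =
      twistedZeta (b * c) y (fun _ k => latticeMonomial α k.1) (s - m) := by
  refine tsum_congr fun x => ?_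
  have hk : (znorm x.2.1 : ℂ) ≠ 0 := Complex.ofReal_ne_zero.2 x.2.znorm_pos.ne'
  rw [zetaTerm, zetaTerm, homogeneousSymbol, neg_sub, sub_eq_add_neg, Complex.cpow_add _ _ hk,
    Complex.cpow_intCast, Pi.mul_apply]
  ring

theorem twistedZeta_zero (s : ℂ) : twistedZeta b y 0 s = 0 := by
  simp [twistedZeta, zetaTerm]

theorem twistedZeta_smul (a : ℂ) (φ : Λ → PuncturedLattice n → ℂ) (s : ℂ) :
    twistedZeta b y (a • φ) s = a * twistedZeta b y φ s := by
  rw [twistedZeta, twistedZeta, ← tsum_mul_left]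
  refine tsum_congr fun x => ?_
  simp only [zetaTerm, Pi.smul_apply, smul_eq_mul]
  ring

variable [SeminormedAddGroup Λ] {D : ℤ} {φ ψ : Λ → PuncturedLattice n → ℂ} (N : ℕ)

namespace IsRapidlyDecreasing

theorem twistedZeta_add (hb : IsRapidlyDecreasing b) (hφ : φ ∈ symbols Λ n D)
    (hψ : ψ ∈ symbols Λ n D) {s : ℂ} (hs : (n + D : ℝ) < s.re) :
    twistedZeta b y (φ + ψ) s = twistedZeta b y φ s + twistedZeta b y ψ s := by
  rw [twistedZeta, twistedZeta, twistedZeta,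
    ← (hb.summable_zetaTerm y hφ hs).tsum_add (hb.summable_zetaTerm y hψ hs)]
  refine tsum_congr fun x => ?_
  simp only [zetaTerm, Pi.add_apply]
  ring

theorem hasContinuation_twistedZeta_add (hb : IsRapidlyDecreasing b) (hφ : φ ∈ symbols Λ n D)
    (hψ : ψ ∈ symbols Λ n D) (hφN : HasContinuation (n + D) N (twistedZeta b y φ))
    (hψN : HasContinuation (n + D) N (twistedZeta b y ψ)) :
    HasContinuation (n + D) N (twistedZeta b y (φ + ψ)) :=
  (hφN.add hψN).congr fun _ hs => hb.twistedZeta_add hφ hψ (by simpa using hs)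

theorem hasContinuation_twistedZeta_of_mem_symbols (hb : IsRapidlyDecreasing b)
    (hφ : φ ∈ symbols Λ n (D - N)) : HasContinuation (n + D) N (twistedZeta b y φ) :=
  .of_differentiableOn <| (hb.differentiableOn_twistedZeta y hφ).mono fun s hs => by
    simpa [add_sub_assoc] using hs

variable [Countable Λ]

theorem hasContinuation_twistedZeta_homogeneousSymbol (hb : IsRapidlyDecreasing b)
    (hy : IsDiophantinePhase y) {c : Λ → ℂ} (hc : IsSlowlyIncreasing c) {α : Fin n → ℕ} {m : ℤ}
    (hα : (∑ i, α i : ℕ) + m ≤ D) :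
    HasContinuation (n + D) N (twistedZeta b y (homogeneousSymbol c α m)) := by
  obtain ⟨H, hd, hH⟩ := (hb.mul_isSlowlyIncreasing hc)
    |>.exists_differentiable_eq_sub_mul_twistedZeta_monomial hy α
  obtain ⟨j, rfl⟩ := Int.le.dest hα
  refine .of_simplePole (j := j) (hd.comp (differentiable_id.sub_const (m : ℂ))) fun s hs => ?_
  rw [Function.comp_apply, id, hH, twistedZeta_homogeneousSymbol]
  · push_cast
    ring
  · have : (0 : ℝ) ≤ j := j.cast_nonneg
    push_cast at hs ⊢
    simp only [Complex.add_re, Complex.sub_re, Complex.re_sum, Complex.natCast_re,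
      Complex.intCast_re] at hs ⊢
    linarith

theorem hasContinuation_twistedZeta_of_mem_polyhomogeneousSymbols (hb : IsRapidlyDecreasing b)
    (hy : IsDiophantinePhase y) (hφ : φ ∈ polyhomogeneousSymbols Λ n D) :
    HasContinuation (n + D) N (twistedZeta b y φ) := by
  induction hφ using Submodule.span_induction with
  | mem _ h =>
    obtain ⟨c, α, m, hc, hα, rfl⟩ := h
    exact hb.hasContinuation_twistedZeta_homogeneousSymbol N hy hc hα
  | zero =>
    exact .of_differentiableOn (by simp only [funext twistedZeta_zero, differentiableOn_const])
  | add φ ψ hφ hψ ihφ ihψ =>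
    exact hb.hasContinuation_twistedZeta_add N (polyhomogeneousSymbols_le_symbols D hφ)
      (polyhomogeneousSymbols_le_symbols D hψ) ihφ ihψ
  | smul a φ _ ih => exact (ih.const_mul a).congr fun s _ => twistedZeta_smul a φ s

theorem hasContinuation_twistedZeta_of_mem_classicalSymbols (hb : IsRapidlyDecreasing b)
    (hy : IsDiophantinePhase y) (hφ : φ ∈ classicalSymbols Λ n D) :
    HasContinuation (n + D) N (twistedZeta b y φ) := by
  obtain ⟨φ₀, hφ₀, φ₁, hφ₁, rfl⟩ := Submodule.mem_sup.1 ((Submodule.mem_iInf _).1 hφ N)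
  exact hb.hasContinuation_twistedZeta_add N (polyhomogeneousSymbols_le_symbols D hφ₀)
    (symbols_mono (by simp) hφ₁)
    (hb.hasContinuation_twistedZeta_of_mem_polyhomogeneousSymbols N hy hφ₀)
    (hb.hasContinuation_twistedZeta_of_mem_symbols N hφ₁)

end IsRapidlyDecreasing

end ZetaContinuation

section DiophantineMatrices

open Matrix

theorem znorm_le_sqrt_mul_norm {n : ℕ} (k : Fin n → ℤ) : znorm k ≤ √n * ‖k‖ := by
  refine Real.sqrt_le_iff.2 ⟨by positivity, ?_⟩
  calc ∑ i, (k i : ℝ) ^ 2 ≤ ∑ _i : Fin n, ‖k‖ ^ 2 := by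
        refine Finset.sum_le_sum fun i _ => ?_
        rw [← sq_abs, ← Int.norm_eq_abs]
        gcongr
        exact norm_le_pi_norm k i
    _ = (√n * ‖k‖) ^ 2 := by simp [mul_pow]

theorem exists_forall_div_le_abs_sub {n : ℕ} (u : Fin n → ℤ) {y : Fin n → ℝ} {ε : ℝ} (hε : 0 < ε)
    (h : ∀ m : ℤ, ε ≤ |∑ i, u i * y i - m|) :
    ∃ i, ∀ m : ℤ, ε / (1 + ∑ i, |(u i : ℝ)|) ≤ |y i - m| := by
  by_contra! hcon
  choose m hm using hcon
  set U := ∑ i, |(u i : ℝ)|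
  have hU : 0 ≤ U := Finset.sum_nonneg fun i _ => abs_nonneg _
  suffices |∑ i, u i * y i - (∑ i, u i * m i : ℤ)| < ε from (h _).not_gt this
  calc |∑ i, u i * y i - (∑ i, u i * m i : ℤ)| = |∑ i, u i * (y i - m i)| := by
        push_cast
        simp only [mul_sub, Finset.sum_sub_distrib]
    _ ≤ ∑ i, |(u i : ℝ)| * |y i - m i| := by
        simpa only [abs_mul] using Finset.abs_sum_le_sum_abs (fun i => u i * (y i - m i)) _
    _ ≤ U * (ε / (1 + U)) := by
        rw [Finset.sum_mul]
        gcongr with i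
        exact (hm i).le
    _ < ε := by
        rw [← mul_div_assoc, div_lt_iff₀ (add_pos_of_pos_of_nonneg one_pos hU)]
        nlinarith

theorem IsDiophantineVector.exists_div_le_abs_sub {n : ℕ} {a : Fin n → ℝ}
    (ha : IsDiophantineVector a) :
    ∃ c > 0, ∃ K : ℕ, ∀ v : Fin n → ℤ, v ≠ 0 → ∀ m : ℤ,
      c / (1 + ‖v‖) ^ K ≤ |∑ i, v i * a i - m| := by
  obtain ⟨δ, -, c, hc, h⟩ := ha
  obtain ⟨K, hK⟩ := exists_nat_ge δ
  refine ⟨c / (1 + √n) ^ K, by positivity, K, fun v hv m => le_trans ?_ (h v hv m)⟩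
  have hv₁ := one_le_znorm hv
  rw [div_div, ← mul_pow, Real.rpow_neg (znorm_nonneg v), ← div_eq_mul_inv]
  gcongr
  calc znorm v ^ δ ≤ znorm v ^ (K : ℝ) := by gcongr
    _ = znorm v ^ K := Real.rpow_natCast _ _
    _ ≤ ((1 + √n) * (1 + ‖v‖)) ^ K := by
        gcongr
        exact (znorm_le_sqrt_mul_norm v).trans (by gcongr <;> simp)

theorem IsDiophantineMatrix.isDiophantinePhase_mulVec {n : ℕ} {T : Matrix (Fin n) (Fin n) ℝ}
    (hT : IsDiophantineMatrix T) :
    IsDiophantinePhase fun v : Fin n → ℤ => T *ᵥ fun i => (v i : ℝ) := by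
  obtain ⟨u, hu⟩ := hT
  obtain ⟨c, hc, K, h⟩ := hu.exists_div_le_abs_sub
  refine ⟨c / (1 + ∑ i, |(u i : ℝ)|), by positivity, K, fun v => ?_⟩
  rcases eq_or_ne v 0 with rfl | hv
  · exact .inl (by ext i; simp [mulVec, dotProduct])
  right
  rw [div_right_comm]
  refine exists_forall_div_le_abs_sub u (by positivity) fun m => ?_
  have hadj : ∑ i, u i * (T *ᵥ fun i => (v i : ℝ)) i = ∑ i, v i * (Tᵀ *ᵥ fun i => (u i : ℝ)) i := by
    have := dotProduct_mulVec (fun i => (u i : ℝ)) T fun i => (v i : ℝ)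
    rwa [← mulVec_transpose, dotProduct_comm (Tᵀ *ᵥ _)] at this
  rw [hadj]
  exact h v hv m

theorem IsDiophantinePhase.comp_isSlowlyIncreasing {Λ Λ' : Type*} [SeminormedAddGroup Λ]
    [SeminormedAddGroup Λ'] {n : ℕ} {y : Λ → Fin n → ℝ} (hy : IsDiophantinePhase y)
    {v : Λ' → Λ} (hv : IsSlowlyIncreasing v) : IsDiophantinePhase (y ∘ v) := by
  obtain ⟨c, hc, K, hK⟩ := hy
  obtain ⟨C, M, hC⟩ := hv
  have hC₀ : 0 ≤ C := by simpa using (norm_nonneg _).trans (hC 0)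
  refine ⟨c / (1 + C) ^ K, by positivity, M * K, fun l => (hK (v l)).imp_right fun ⟨i, hi⟩ =>
    ⟨i, fun m => le_trans ?_ (hi m)⟩⟩
  rw [div_div, pow_mul, ← mul_pow]
  gcongr
  have : 1 ≤ (1 + ‖l‖) ^ M := one_le_pow₀ (by simp)
  linarith [hC l]

end DiophantineMatrices

section BigZeta

open Matrix
open scoped FourierTransform

theorem isSlowlyIncreasing_sum {ι E : Type*} [Fintype ι] [SeminormedAddCommGroup E]
    (F : Finset ι) : IsSlowlyIncreasing fun l : ι → E => ∑ t ∈ F, l t := by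
  refine ⟨F.card, 1, fun l => ?_⟩
  calc ‖∑ t ∈ F, l t‖ ≤ ∑ _t ∈ F, ‖l‖ := norm_sum_le_of_le _ fun t _ => norm_le_pi_norm l t
    _ ≤ F.card * (1 + ‖l‖) ^ 1 := by
      rw [Finset.sum_const, nsmul_eq_mul, pow_one]
      gcongr
      linarith

theorem IsSlowlyIncreasing.intCast_apply {Λ ι : Type*} [SeminormedAddGroup Λ] [Fintype ι]
    {v : Λ → ι → ℤ} (hv : IsSlowlyIncreasing v) (i : ι) :
    IsSlowlyIncreasing fun l => (v l i : ℂ) := by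
  obtain ⟨C, M, hC⟩ := hv
  refine ⟨C, M, fun l => le_trans ?_ (hC l)⟩
  rw [Complex.norm_intCast, ← Int.norm_eq_abs]
  exact norm_le_pi_norm (v l) i

variable {q n : ℕ} (p : Fin (q - 1) → ℕ) (Q : MvPolynomial (Fin n) ℝ)
  (Θ : Matrix (Fin n) (Fin n) ℝ)

/-- The symbol `∏ᵢ |k + l̃ᵢ|^{pᵢ} Q(k)` of the zeta function of the theorem. -/
def bigSymbol (l : Fin (2 * q) → Fin n → ℤ) (k : PuncturedLattice n) : ℂ :=
  (∏ i : Fin (q - 1), (znorm (k.1 + ltilde l (i + 1)) : ℂ) ^ p i) *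
    ((Q.eval fun i => (k.1 i : ℝ) : ℝ) : ℂ)

/-- The phases `(2π)⁻¹ Θ(l₁ + ⋯ + l_q)` of the zeta function of the theorem. -/
def bigPhase (l : Fin (2 * q) → Fin n → ℤ) : Fin n → ℝ :=
  ((2 * Real.pi)⁻¹ • Θ) *ᵥ fun i => (lsumq l i : ℝ)

theorem bigSymbol_mem_classicalSymbols :
    bigSymbol p Q ∈ classicalSymbols (Fin (2 * q) → Fin n → ℤ) n
      ((∑ i, p i : ℕ) + Q.totalDegree) := by
  set A : ℤ → Submodule ℂ ((Fin (2 * q) → Fin n → ℤ) → PuncturedLattice n → ℂ) :=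
    classicalSymbols _ n
  set ρ : Fin (q - 1) → (Fin (2 * q) → Fin n → ℤ) → PuncturedLattice n → ℂ :=
    fun i l k => znorm (k.1 + ltilde l (i + 1))
  have hρ : ∀ i, ρ i ∈ A 1 := fun i =>
    znorm_add_mem_classicalSymbols (isSlowlyIncreasing_sum _).intCast_apply
  have hprod : ∏ i, ρ i ^ p i ∈ A (∑ i, p i : ℕ) := by
    simpa using SetLike.prod_pow_mem_graded A (fun _ => 1) ρ p fun i _ => hρ i
  have hQ := polyhomogeneousSymbols_le_classicalSymbols (Λ := Fin (2 * q) → Fin n → ℤ) _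
    (eval_mem_polyhomogeneousSymbols Q)
  convert SetLike.mul_mem_graded hprod hQ using 1
  funext l k
  simp [bigSymbol, ρ, Finset.prod_apply]

theorem isDiophantinePhase_bigPhase (hΘ : IsDiophantineMatrix ((2 * Real.pi)⁻¹ • Θ)) :
    IsDiophantinePhase (bigPhase Θ : (Fin (2 * q) → Fin n → ℤ) → Fin n → ℝ) :=
  hΘ.isDiophantinePhase_mulVec.comp_isSlowlyIncreasing (isSlowlyIncreasing_sum _)

theorem fourierChar_sum_mul_bigPhase (l : Fin (2 * q) → Fin n → ℤ) (k : Fin n → ℤ) :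
    (𝐞 (∑ i, k i * bigPhase Θ l i) : ℂ) =
      Complex.exp (Complex.I * (∑ i, (k i : ℝ) * (Θ *ᵥ fun j => (lsumq l j : ℝ)) i : ℝ)) := by
  have hphase : ∑ i, k i * bigPhase Θ l i =
      (2 * Real.pi)⁻¹ * ∑ i, (k i : ℝ) * (Θ *ᵥ fun j => (lsumq l j : ℝ)) i := by
    rw [Finset.mul_sum]
    refine Finset.sum_congr rfl fun i _ => ?_
    rw [bigPhase, smul_mulVec, Pi.smul_apply, smul_eq_mul]
    ring
  rw [hphase, Real.fourierChar_apply, mul_inv_cancel_left₀ Real.two_pi_pos.ne', mul_comm]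

theorem zetaTerm_bigSymbol (a : (Fin (2 * q) → Fin n → ℤ) → ℂ) (s : ℂ)
    (l : Fin (2 * q) → Fin n → ℤ) (k : PuncturedLattice n) :
    zetaTerm a (bigPhase Θ) (bigSymbol p Q) s (l, k) = a l * bigTerm p Q Θ s l k := by
  rw [zetaTerm, fourierChar_sum_mul_bigPhase, bigSymbol, bigTerm, if_neg k.2, Complex.cpow_neg]
  ring

theorem tsum_puncturedLattice_bigTerm (s : ℂ) (l : Fin (2 * q) → Fin n → ℤ) :
    ∑' k : PuncturedLattice n, bigTerm p Q Θ s l k = ∑' k, bigTerm p Q Θ s l k :=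
  tsum_subtype_eq_of_support_subset (s := {k | k ≠ 0}) fun _ hk h0 => hk (if_pos h0)

theorem twistedZeta_bigSymbol {a : (Fin (2 * q) → Fin n → ℤ) → ℂ} (ha : IsRapidlyDecreasing a)
    {s : ℂ} (hs : n + Q.totalDegree + ∑ i, (p i : ℝ) < s.re) :
    twistedZeta a (bigPhase Θ) (bigSymbol p Q) s =
      ∑' l, a l * ∑' k, bigTerm p Q Θ s l k := by
  have hsum := ha.summable_zetaTerm (bigPhase Θ) (s := s)
    (classicalSymbols_le_symbols _ (bigSymbol_mem_classicalSymbols p Q)) (by push_cast; linarith)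
  rw [twistedZeta, hsum.tsum_prod]
  refine tsum_congr fun l => ?_
  simp only [zetaTerm_bigSymbol, tsum_mul_left, tsum_puncturedLattice_bigTerm]

theorem hasContinuation_bigZeta (hΘ : IsDiophantineMatrix ((2 * Real.pi)⁻¹ • Θ))
    {a : (Fin (2 * q) → Fin n → ℤ) → ℂ} (ha : IsSchwartzSeq a) (N : ℕ) :
    HasContinuation (n + Q.totalDegree + ∑ i, (p i : ℂ)) N fun s =>
      ∑' l, a l * ∑' k, bigTerm p Q Θ s l k := by
  have := ha.isRapidlyDecreasing.hasContinuation_twistedZeta_of_mem_classicalSymbols N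
    (isDiophantinePhase_bigPhase Θ hΘ) (bigSymbol_mem_classicalSymbols p Q)
  have hB : (n + ((∑ i, p i : ℕ) + Q.totalDegree : ℤ) : ℂ) =
      n + Q.totalDegree + ∑ i, (p i : ℂ) := by
    push_cast
    ring
  rw [hB] at this
  refine this.congr fun s hs => (twistedZeta_bigSymbol p Q Θ ha.isRapidlyDecreasing ?_).symm
  simpa using hs

end BigZeta

/-- **Theorem.** Let `q ≥ 2`, `p ∈ ℕ₀^{q-1}` with some `pᵢ ≠ 0`, `Q ∈ ℝ[X₁,…,Xₙ]`
of degree `d`, `(1/2π)Θ` a diophantine matrix, and `ã ∈ 𝒮((ℤⁿ)^{2q})`.  Then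
`f(s) = Σ_l ã_l Σ'_k ∏_{i=1}^{q-1}|k+l̃ᵢ|^{pᵢ} |k|^{-s} Q(k) e^{ik·Θ(l₁+⋯+l_q)}`
has a meromorphic continuation to `ℂ` with at most simple poles, all contained in
`{n + d + |p|₁ − m : m ∈ ℕ₀}`. -/
theorem bigZeta_meromorphic (n q : ℕ) (hn : 0 < n) (hq : 2 ≤ q)
    (p : Fin (q - 1) → ℕ) (hp : ∃ i, p i ≠ 0)
    (Q : MvPolynomial (Fin n) ℝ)
    (Θ : Matrix (Fin n) (Fin n) ℝ)
    (hΘ : IsDiophantineMatrix ((2 * Real.pi)⁻¹ • Θ))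
    (a : (Fin (2 * q) → Fin n → ℤ) → ℂ) (ha : IsSchwartzSeq a) :
    ∃ g : ℂ → ℂ,
      DifferentiableOn ℂ g
        {s : ℂ | ∀ m : ℕ,
          s ≠ (n : ℂ) + (Q.totalDegree : ℂ) + (∑ i, (p i : ℂ)) - (m : ℂ)} ∧
      (∀ s : ℂ, (n : ℝ) + (Q.totalDegree : ℝ) + (∑ i, (p i : ℝ)) < s.re →
        g s = ∑' l : Fin (2 * q) → Fin n → ℤ,
          a l * ∑' k : Fin n → ℤ, bigTerm p Q Θ s l k) ∧
      (∀ m : ℕ, ∃ R : ℂ,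
        Tendsto
          (fun s => (s - ((n : ℂ) + (Q.totalDegree : ℂ) + (∑ i, (p i : ℂ)) - (m : ℂ))) * g s)
          (𝓝[≠] ((n : ℂ) + (Q.totalDegree : ℂ) + (∑ i, (p i : ℂ)) - (m : ℂ)))
          (𝓝 R)) := by
  obtain ⟨g, hg, hgf, hlim⟩ := exists_differentiableOn_of_hasContinuation
    (hasContinuation_bigZeta p Q Θ hΘ ha)
  exact ⟨g, hg, fun s hs => hgf s (by simpa using hs), hlim⟩

end
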